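/- arXiv:1810.02846 — 3 statements merged into one kernel-verified Lean document; each statement's English description precedes it below -/
import Mathlib

section
/- Let d = d_1 + ⋯ + d_q with d_m ≥ 0, let (𝐚^{(m)},𝐫^{(m)},𝐬^{(m)}) ∈ Tri^H(n,d_m) for each m, and let (𝐚,𝐫,𝐬) be the concatenation. Suppose (𝐚,𝐫,𝐬) is δ-separated, i.e. whenever m ≠ l, no entry triple (a^{(m)}_t, r^{(m)}_t, s^{(m)}_t) equals an entry triple (a^{(l)}_u, r^{(l)}_u, s^{(l)}_u) (in which case automatically (𝐚,𝐫,𝐬) ∈ Tri^H(n,d)). Then ξ^𝐚_{𝐫,𝐬} = ξ^{𝐚^{(1)}}_{𝐫^{(1)},𝐬^{(1)}} * ⋯ * ξ^{𝐚^{(q)}}_{𝐫^{(q)},𝐬^{(q)}}, and if moreover all entries of all 𝐚^{(m)} lie in B, then η^𝐚_{𝐫,𝐬} = η^{𝐚^{(1)}}_{𝐫^{(1)},𝐬^{(1)}} * ⋯ * η^{𝐚^{(q)}}_{𝐫^{(q)},𝐬^{(q)}}. -/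
open Finset

open scoped Classical TensorProduct

noncomputable section

namespace GS

/-- A *good pair* `(A, 𝔞)`: a `𝕜`-superalgebra `A = ev ⊕ od` which is free as a
`𝕜`-supermodule, together with a subalgebra `𝔞 = aa ⊆ A₀` such that `𝔞` and `A/𝔞` are free,
a complement `𝔠 = cc` of `𝔞` in `A₀`, and an `(A,𝔞)`-basis `B = B_𝔞 ⊔ B_𝔠 ⊔ B_1`
(encoded by `bas : Basis β 𝕜 A` with the partition `part : β → Fin 3`,
where `0` = `B_𝔞`, `1` = `B_𝔠`, `2` = `B_1`). -/
structure GoodPair (𝕜 A β : Type) [CommRing 𝕜] [NonUnitalRing A] [Module 𝕜 A] : Type where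
  ev : Submodule 𝕜 A
  od : Submodule 𝕜 A
  compl : IsCompl ev od
  mul_ee : ∀ a ∈ ev, ∀ b ∈ ev, a * b ∈ ev
  mul_eo : ∀ a ∈ ev, ∀ b ∈ od, a * b ∈ od
  mul_oe : ∀ a ∈ od, ∀ b ∈ ev, a * b ∈ od
  mul_oo : ∀ a ∈ od, ∀ b ∈ od, a * b ∈ ev
  free_ev : Module.Free 𝕜 ev
  free_od : Module.Free 𝕜 od
  aa : Submodule 𝕜 A
  aa_le_ev : aa ≤ ev
  aa_mul : ∀ a ∈ aa, ∀ b ∈ aa, a * b ∈ aa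
  free_aa : Module.Free 𝕜 aa
  free_quot : Module.Free 𝕜 (A ⧸ aa)
  cc : Submodule 𝕜 A
  aa_inf_cc : aa ⊓ cc = ⊥
  aa_sup_cc : aa ⊔ cc = ev
  bas : Module.Basis β 𝕜 A
  part : β → Fin 3
  bas_mem_aa : ∀ i, part i = 0 → bas i ∈ aa
  bas_mem_cc : ∀ i, part i = 1 → bas i ∈ cc
  bas_mem_od : ∀ i, part i = 2 → bas i ∈ od

variable {𝕜 A β : Type} [CommRing 𝕜] [NonUnitalRing A] [Module 𝕜 A]

/-- An element is homogeneous if it lies in the even or the odd part. -/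
def Homog (P : GoodPair 𝕜 A β) (a : A) : Prop := a ∈ P.ev ∨ a ∈ P.od

/-- `H`, the set of nonzero homogeneous elements of `A`. -/
def Hset (P : GoodPair 𝕜 A β) : Set A := {a | Homog P a ∧ a ≠ 0}

/-- `⟨𝐚,𝐜⟩ = #{(k,l) : k > l, a_k odd, c_l odd}` (the Koszul sign count). -/
def koz (od : Submodule 𝕜 A) {d : ℕ} (a c : Fin d → A) : ℕ :=
  (univ.filter fun kl : Fin d × Fin d => kl.2 < kl.1 ∧ a kl.1 ∈ od ∧ c kl.2 ∈ od).card

/-- `⟨σ;𝐚⟩ = #{(k,l) : k < l, σ⁻¹k > σ⁻¹l, a_k and a_l odd}`. -/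
def sgnc (od : Submodule 𝕜 A) {d : ℕ} (σ : Equiv.Perm (Fin d)) (a : Fin d → A) : ℕ :=
  (univ.filter fun kl : Fin d × Fin d =>
    kl.1 < kl.2 ∧ σ⁻¹ kl.2 < σ⁻¹ kl.1 ∧ a kl.1 ∈ od ∧ a kl.2 ∈ od).card

/-- `⟨𝐚,𝐫,𝐬⟩ = #{(k,l) : k < l, a_k, a_l odd, (a_k,r_k,s_k) > (a_l,r_l,s_l)}` with respect to
the fixed total order `ord` on `A × [1,n] × [1,n]`. -/
def ang {n : ℕ} (od : Submodule 𝕜 A) (ord : LinearOrder (A × Fin n × Fin n))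
    {d : ℕ} (a : Fin d → A) (r s : Fin d → Fin n) : ℕ :=
  (univ.filter fun kl : Fin d × Fin d =>
    kl.1 < kl.2 ∧ a kl.1 ∈ od ∧ a kl.2 ∈ od ∧
      ord.lt (a kl.2, r kl.2, s kl.2) (a kl.1, r kl.1, s kl.1)).card

/-- `(𝐚,𝐫,𝐬) ∈ Tri^H(n,d)`: all entries are nonzero homogeneous, and a repeated entry
triple forces evenness. -/
def IsTriH (P : GoodPair 𝕜 A β) {n d : ℕ} (a : Fin d → A) (r s : Fin d → Fin n) : Prop :=
  (∀ k, a k ∈ Hset P) ∧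
    ∀ k l : Fin d, k ≠ l → (a k, r k, s k) = (a l, r l, s l) → a k ∈ P.ev

/-- `(𝐛,𝐫,𝐬) ∈ Tri^B(n,d)` for words of basis elements. -/
def IsTriB (P : GoodPair 𝕜 A β) {n d : ℕ} (b : Fin d → β) (r s : Fin d → Fin n) : Prop :=
  ∀ k l : Fin d, k ≠ l → ((b k, r k, s k) : β × Fin n × Fin n) = (b l, r l, s l) →
    P.part (b k) ≠ 2

/-- Minimal length representatives of the cosets `(S_e × S_f)\S_{e+f}`. -/
def IsShuffle (e f : ℕ) (σ : Equiv.Perm (Fin (e + f))) : Prop :=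
  (∀ k l : Fin (e + f), k < l → (l : ℕ) < e → σ⁻¹ k < σ⁻¹ l) ∧
  (∀ k l : Fin (e + f), k < l → e ≤ (k : ℕ) → σ⁻¹ k < σ⁻¹ l)

/-- The tower of superalgebras `M_n(A)^{⊗d}`, `d ≥ 0`, axiomatised.  `X a r s` is the pure
tensor `ξ^{a_1}_{r_1,s_1} ⊗ ⋯ ⊗ ξ^{a_d}_{r_d,s_d}` of matrix units; it is multilinear in the
`A`-entries, the pure tensors of basis elements form a basis, multiplication is the sign-twisted
(Koszul) componentwise one, `act` is the right action of the symmetric groups by superalgebra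
automorphisms, `evT/odT` is the induced supermodule structure, `star` is the `*`-(shuffle)
product and `nab` gives the components of the deconcatenation coproduct `∇`. -/
structure Tower (𝕜 A β : Type) [CommRing 𝕜] [NonUnitalRing A] [Module 𝕜 A]
    (n : ℕ) (T : ℕ → Type) [∀ e, NonUnitalRing (T e)] [∀ e, Module 𝕜 (T e)]
    (P : GoodPair 𝕜 A β) : Type where
  X : ∀ {e : ℕ}, (Fin e → A) → (Fin e → Fin n) → (Fin e → Fin n) → T e
  X_update_add : ∀ {e : ℕ} (a : Fin e → A) (r s : Fin e → Fin n) (k : Fin e) (x y : A),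
    X (Function.update a k (x + y)) r s
      = X (Function.update a k x) r s + X (Function.update a k y) r s
  X_update_smul : ∀ {e : ℕ} (a : Fin e → A) (r s : Fin e → Fin n) (k : Fin e) (c : 𝕜) (x : A),
    X (Function.update a k (c • x)) r s = c • X (Function.update a k x) r s
  bas : ∀ e : ℕ, Module.Basis ((Fin e → β) × (Fin e → Fin n) × (Fin e → Fin n)) 𝕜 (T e)
  bas_eq : ∀ (e : ℕ) (b : Fin e → β) (r s : Fin e → Fin n),
    bas e (b, r, s) = X (fun k => P.bas (b k)) r s
  X_mul : ∀ {e : ℕ} (a c : Fin e → A) (r s t u : Fin e → Fin n),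
    (∀ k, Homog P (a k)) → (∀ k, Homog P (c k)) →
    X a r s * X c t u
      = if s = t then ((-1 : ℤ) ^ koz P.od a c) • X (fun k => a k * c k) r u else 0
  act : ∀ {e : ℕ}, Equiv.Perm (Fin e) → T e →ₗ[𝕜] T e
  act_act : ∀ {e : ℕ} (σ τ : Equiv.Perm (Fin e)) (x : T e), act τ (act σ x) = act (σ * τ) x
  act_mul : ∀ {e : ℕ} (σ : Equiv.Perm (Fin e)) (x y : T e), act σ (x * y) = act σ x * act σ y
  act_X : ∀ {e : ℕ} (σ : Equiv.Perm (Fin e)) (a : Fin e → A) (r s : Fin e → Fin n),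
    (∀ k, Homog P (a k)) →
    act σ (X a r s) = ((-1 : ℤ) ^ sgnc P.od σ a) • X (a ∘ σ) (r ∘ σ) (s ∘ σ)
  evT : ∀ e : ℕ, Submodule 𝕜 (T e)
  odT : ∀ e : ℕ, Submodule 𝕜 (T e)
  complT : ∀ e : ℕ, IsCompl (evT e) (odT e)
  X_mem_evT : ∀ {e : ℕ} (a : Fin e → A) (r s : Fin e → Fin n), (∀ k, Homog P (a k)) →
    Even (univ.filter fun k => a k ∈ P.od).card → X a r s ∈ evT e
  X_mem_odT : ∀ {e : ℕ} (a : Fin e → A) (r s : Fin e → Fin n), (∀ k, Homog P (a k)) →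
    ¬ Even (univ.filter fun k => a k ∈ P.od).card → X a r s ∈ odT e
  star : ∀ {e f : ℕ}, T e →ₗ[𝕜] T f →ₗ[𝕜] T (e + f)
  star_X : ∀ {e f : ℕ} (a : Fin e → A) (r s : Fin e → Fin n)
      (c : Fin f → A) (t u : Fin f → Fin n),
    star (X a r s) (X c t u)
      = ∑ σ ∈ univ.filter (IsShuffle e f),
          act σ (X (Fin.append a c) (Fin.append r t) (Fin.append s u))
  nab : ∀ e f : ℕ, T (e + f) →ₗ[𝕜] TensorProduct 𝕜 (T e) (T f)
  nab_X : ∀ (e f : ℕ) (a : Fin (e + f) → A) (r s : Fin (e + f) → Fin n),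
    nab e f (X a r s)
      = (X (a ∘ Fin.castAdd f) (r ∘ Fin.castAdd f) (s ∘ Fin.castAdd f))
          ⊗ₜ[𝕜] (X (a ∘ Fin.natAdd e) (r ∘ Fin.natAdd e) (s ∘ Fin.natAdd e))

variable {n : ℕ} {T : ℕ → Type} [∀ e, NonUnitalRing (T e)] [∀ e, Module 𝕜 (T e)]

/-- `ξ^𝐚_{𝐫,𝐬}`, the signed sum of the pure tensors over the `S_d`-orbit of `(𝐚,𝐫,𝐬)`. -/
def xiH {P : GoodPair 𝕜 A β} (D : Tower 𝕜 A β n T P) (ord : LinearOrder (A × Fin n × Fin n))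
    {d : ℕ} (a : Fin d → A) (r s : Fin d → Fin n) : T d :=
  ∑ w ∈ (univ.image fun σ : Equiv.Perm (Fin d) => (a ∘ σ, r ∘ σ, s ∘ σ)),
    ((-1 : ℤ) ^ (ang P.od ord a r s + ang P.od ord w.1 w.2.1 w.2.2)) • D.X w.1 w.2.1 w.2.2

/-- `ξ^𝐛_{𝐫,𝐬}` for a word `𝐛` of basis elements. -/
def xiB {P : GoodPair 𝕜 A β} (D : Tower 𝕜 A β n T P) (ord : LinearOrder (A × Fin n × Fin n))
    {d : ℕ} (b : Fin d → β) (r s : Fin d → Fin n) : T d :=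
  xiH D ord (fun k => P.bas (b k)) r s

/-- `[𝐛,𝐫,𝐬]^b_{r,s}`, the multiplicity of an entry triple in a word triple. -/
def mco {n d : ℕ} (b : Fin d → β) (r s : Fin d → Fin n) (w : β × Fin n × Fin n) : ℕ :=
  (univ.filter fun k => ((b k, r k, s k) : β × Fin n × Fin n) = w).card

/-- `∏ ([𝐛,𝐫,𝐬]^b_{r,s})!` over the entry triples whose basis element satisfies `sel`
(e.g. `sel i = (part i = 1)` gives `[𝐛,𝐫,𝐬]^!_𝔠`). -/
def facSel (sel : β → Prop) {n d : ℕ} (b : Fin d → β) (r s : Fin d → Fin n) : ℕ :=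
  ∏ w ∈ ((univ.image fun k => ((b k, r k, s k) : β × Fin n × Fin n)).filter fun w => sel w.1),
    Nat.factorial (mco b r s w)

/-- `η^𝐛_{𝐫,𝐬} := [𝐛,𝐫,𝐬]^!_𝔠 • ξ^𝐛_{𝐫,𝐬}`. -/
def eta {P : GoodPair 𝕜 A β} (D : Tower 𝕜 A β n T P) (ord : LinearOrder (A × Fin n × Fin n))
    {d : ℕ} (b : Fin d → β) (r s : Fin d → Fin n) : T d :=
  facSel (fun i => P.part i = 1) b r s • xiB D ord b r s

/-- `S^A(n,d) = (M_n(A)^{⊗d})^{S_d}`, the invariants. -/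
def SchurS {P : GoodPair 𝕜 A β} (D : Tower 𝕜 A β n T P) (d : ℕ) : Submodule 𝕜 (T d) where
  carrier := {x | ∀ σ : Equiv.Perm (Fin d), D.act σ x = x}
  add_mem' := by
    intro x y hx hy σ
    rw [map_add, hx σ, hy σ]
  zero_mem' := by
    intro σ; exact map_zero _
  smul_mem' := by
    intro c x hx σ
    rw [map_smul, hx σ]

/-- The generalized Schur algebra `T^A_𝔞(n,d)`, the `𝕜`-span of the `η^𝐛_{𝐫,𝐬}`,
`(𝐛,𝐫,𝐬) ∈ Tri^B(n,d)`. -/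
def SchurT {P : GoodPair 𝕜 A β} (D : Tower 𝕜 A β n T P) (ord : LinearOrder (A × Fin n × Fin n))
    (d : ℕ) : Submodule 𝕜 (T d) :=
  Submodule.span 𝕜 {x | ∃ b r s, IsTriB P b r s ∧ x = eta D ord b r s}

/-- `S^𝔞(n,d) = (M_n(𝔞)^{⊗d})^{S_d} ⊆ S^A(n,d)`. -/
def SchurA {P : GoodPair 𝕜 A β} (D : Tower 𝕜 A β n T P) (d : ℕ) : Submodule 𝕜 (T d) :=
  Submodule.span 𝕜 {x | ∃ a r s, (∀ k, a k ∈ P.aa) ∧ x = D.X a r s} ⊓ SchurS D d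

/-- `ξ^f = E^f ⊗ ⋯ ⊗ E^f` for `f ∈ A`. -/
def xiIdem {P : GoodPair 𝕜 A β} (D : Tower 𝕜 A β n T P) (f : A) (d : ℕ) : T d :=
  ∑ r : Fin d → Fin n, D.X (fun _ => f) r r

/-- Transport along an equality of degrees. -/
def tcast {e f : ℕ} (h : e = f) : T e ≃ₗ[𝕜] T f := by
  subst h; exact LinearEquiv.refl 𝕜 (T e)

/-- Iterated `*`-product `x_1 * x_2 * ⋯ * x_d` of degree-one pure tensors read off from a
word (associated to the left). -/
def starIter {P : GoodPair 𝕜 A β} (D : Tower 𝕜 A β n T P) :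
    ∀ (e : ℕ), (Fin e → A) → (Fin e → Fin n) → (Fin e → Fin n) → T e
  | 0, _, _, _ => D.X Fin.elim0 Fin.elim0 Fin.elim0
  | (e + 1), a, r, s =>
      D.star (starIter D e (a ∘ Fin.castSucc) (r ∘ Fin.castSucc) (s ∘ Fin.castSucc))
        (D.X (fun _ : Fin 1 => a (Fin.last e)) (fun _ => r (Fin.last e)) (fun _ => s (Fin.last e)))

/-- Iterated `*`-product of blockwise given elements. -/
def starBlocks {P : GoodPair 𝕜 A β} (D : Tower 𝕜 A β n T P) :
    ∀ (q : ℕ) (sz : Fin q → ℕ), (∀ m, T (sz m)) → T (∑ m, sz m)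
  | 0, sz, _ => cast (congrArg T (Fin.sum_univ_zero sz).symm) (D.X Fin.elim0 Fin.elim0 Fin.elim0)
  | (q + 1), sz, x =>
      cast (congrArg T (Fin.sum_univ_castSucc sz).symm)
        (D.star (starBlocks D q (fun m => sz m.castSucc) (fun m => x m.castSucc))
          (x (Fin.last q)))

/-- Concatenation of a tuple of words of lengths `sz 0, …, sz (q-1)`. -/
def concatB {α : Type} : ∀ {q : ℕ} (sz : Fin q → ℕ), (∀ m, Fin (sz m) → α) → Fin (∑ m, sz m) → α
  | 0, sz, _ => fun k => Fin.elim0 (cast (congrArg Fin (Fin.sum_univ_zero sz)) k)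
  | (q + 1), sz, f => fun k =>
      Fin.append (concatB (fun m => sz m.castSucc) (fun m => f m.castSucc)) (f (Fin.last q))
        (cast (congrArg Fin (Fin.sum_univ_castSucc sz)) k)

/-- A triple of words `(𝐛,𝐫,𝐬)`. -/
abbrev WordTriple (β : Type) (n d : ℕ) : Type :=
  (Fin d → β) × (Fin d → Fin n) × (Fin d → Fin n)

/-- The diagonal right place-permutation action on triples of words. -/
def wAct {d : ℕ} (w : WordTriple β n d) (σ : Equiv.Perm (Fin d)) : WordTriple β n d :=
  (w.1 ∘ σ, w.2.1 ∘ σ, w.2.2 ∘ σ)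

/-- The `k`-th entry triple `(b_k, r_k, s_k)` (with `b_k` realized in `A`). -/
def entryAt (P : GoodPair 𝕜 A β) {n d : ℕ} (w : WordTriple β n d) (k : Fin d) :
    A × Fin n × Fin n :=
  (P.bas (w.1 k), w.2.1 k, w.2.2 k)

/-- The lexicographic order on triples of words induced by the total order `ord`. -/
def wordLE (P : GoodPair 𝕜 A β) {n : ℕ} (ord : LinearOrder (A × Fin n × Fin n)) {d : ℕ}
    (w w' : WordTriple β n d) : Prop :=
  (∀ k, entryAt P w k = entryAt P w' k) ∨
    ∃ l : Fin d, (∀ k, k < l → entryAt P w k = entryAt P w' k) ∧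
      ord.lt (entryAt P w l) (entryAt P w' l)

/-- `Tri^B_0(n,d)`: the lexicographically minimal representatives of the `S_d`-orbits on
`Tri^B(n,d)`. -/
def IsTri0 (P : GoodPair 𝕜 A β) {n : ℕ} (ord : LinearOrder (A × Fin n × Fin n)) {d : ℕ}
    (w : WordTriple β n d) : Prop :=
  IsTriB P w.1 w.2.1 w.2.2 ∧ ∀ σ : Equiv.Perm (Fin d), wordLE P ord w (wAct w σ)

/-- The first `l` letters of each word. -/
def firstW {d : ℕ} (l : ℕ) (hl : l ≤ d) (w : WordTriple β n d) : WordTriple β n l :=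
  (fun k => w.1 ⟨k, lt_of_lt_of_le k.isLt hl⟩,
   fun k => w.2.1 ⟨k, lt_of_lt_of_le k.isLt hl⟩,
   fun k => w.2.2 ⟨k, lt_of_lt_of_le k.isLt hl⟩)

/-- The last `d - l` letters of each word. -/
def lastW {d : ℕ} (l : ℕ) (hl : l ≤ d) (w : WordTriple β n d) : WordTriple β n (d - l) :=
  (fun k => w.1 ⟨l + (k : ℕ), by have := k.isLt; omega⟩,
   fun k => w.2.1 ⟨l + (k : ℕ), by have := k.isLt; omega⟩,
   fun k => w.2.2 ⟨l + (k : ℕ), by have := k.isLt; omega⟩)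

/-- Concatenation of words. -/
def appF {α : Type} {d : ℕ} (l : ℕ) (hl : l ≤ d) (f : Fin l → α) (g : Fin (d - l) → α) :
    Fin d → α :=
  fun k => if hk : (k : ℕ) < l then f ⟨k, hk⟩ else g ⟨(k : ℕ) - l, by have := k.isLt; omega⟩

/-- Concatenation `T¹T²` of two triples of words. -/
def concatW {d : ℕ} (l : ℕ) (hl : l ≤ d) (p : WordTriple β n l × WordTriple β n (d - l)) :
    WordTriple β n d :=
  (appF l hl p.1.1 p.2.1, appF l hl p.1.2.1 p.2.2.1, appF l hl p.1.2.2 p.2.2.2)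

/-- `Spl_l(T)`, the set of `l`-splits of `T ∈ Tri^B_0(n,d)`. -/
def splitsF (P : GoodPair 𝕜 A β) {n : ℕ} (ord : LinearOrder (A × Fin n × Fin n)) {d : ℕ}
    (l : ℕ) (hl : l ≤ d) (w : WordTriple β n d) :
    Finset (WordTriple β n l × WordTriple β n (d - l)) :=
  (univ.image fun σ : Equiv.Perm (Fin d) =>
      (firstW l hl (wAct w σ), lastW l hl (wAct w σ))).filter
    fun p => IsTri0 P ord p.1 ∧ IsTri0 P ord p.2

/-- The number of inversions (= Coxeter length) of a permutation. -/
def invCount {d : ℕ} (σ : Equiv.Perm (Fin d)) : ℕ :=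
  (univ.filter fun kl : Fin d × Fin d => kl.1 < kl.2 ∧ σ kl.2 < σ kl.1).card

/-- The submodule `{x | x·ε = x}` (for an idempotent `ε` this is `R·ε`). -/
def rfix (𝕜 : Type) {R : Type} [CommRing 𝕜] [NonUnitalRing R] [Module 𝕜 R]
    [IsScalarTower 𝕜 R R] (ε : R) : Submodule 𝕜 R where
  carrier := {x | x * ε = x}
  add_mem' := by
    intro x y hx hy
    simp only [Set.mem_setOf_eq] at *
    rw [add_mul, hx, hy]
  zero_mem' := by simp
  smul_mem' := by
    intro c x hx
    simp only [Set.mem_setOf_eq] at *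
    rw [smul_mul_assoc, hx]

/-- Right `εSε`-module endomorphism property for a map of `S·ε = M ⊓ rfix ε`,
where `S` is the (possibly non-unital) algebra realized as the submodule `M` of `R`. -/
def IsEquivar (𝕜 : Type) {R : Type} [CommRing 𝕜] [NonUnitalRing R] [Module 𝕜 R]
    [IsScalarTower 𝕜 R R] (M : Submodule 𝕜 R) (ε : R)
    (f : ↥(M ⊓ rfix 𝕜 ε) →ₗ[𝕜] ↥(M ⊓ rfix 𝕜 ε)) : Prop :=
  ∀ (x : ↥(M ⊓ rfix 𝕜 ε)) (c : R), c ∈ M → ε * c * ε = c →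
    ∀ h : (x : R) * c ∈ M ⊓ rfix 𝕜 ε,
      ((f ⟨(x : R) * c, h⟩ : ↥(M ⊓ rfix 𝕜 ε)) : R) = (f x : R) * c

/-- `ε` is a *double centralizer idempotent* for the algebra `M ⊆ R`: the left
multiplication map `λ : M → End_{εMε}(Mε)` is bijective. -/
def IsDCI (𝕜 : Type) {R : Type} [CommRing 𝕜] [NonUnitalRing R] [Module 𝕜 R]
    [IsScalarTower 𝕜 R R] (M : Submodule 𝕜 R) (ε : R) : Prop :=
  (∀ s ∈ M, ∀ s' ∈ M, (∀ x ∈ M ⊓ rfix 𝕜 ε, s * x = s' * x) → s = s') ∧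
  (∀ f : ↥(M ⊓ rfix 𝕜 ε) →ₗ[𝕜] ↥(M ⊓ rfix 𝕜 ε), IsEquivar 𝕜 M ε f →
    ∃ s ∈ M, ∀ x : ↥(M ⊓ rfix 𝕜 ε), (f x : R) = s * (x : R))

/-
It suffices to concatenate two words. By separation, a rearrangement of the concatenation is, in
exactly one way, a shuffle of a rearrangement of the first word with one of the second. So `ξ` of
the concatenation and the `*`-product of the two `ξ` involve the same pure tensors, each once. The
signs agree because `⟨σ;𝐚⟩` has the parity of the change in `⟨𝐚,𝐫,𝐬⟩` under the place permutation
`σ`: up to sign, both sides sum the `σ`-translates of one pure tensor. For `η`, separated blocks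
share no letter, so the multiplicities, and with them the factorials, are those of the blocks.
-/

section DiscordantPairs

variable {ι κ α γ δ : Type*}

/-- The pairs `(k, l)` of elements of `s` such that `f k < f l` but `g l < g k`. Both `⟨σ;𝐚⟩` and
`⟨𝐚,𝐫,𝐬⟩` count discordant pairs of odd positions. -/
def discordantPairs [LT α] [LT γ] (s : Finset ι) (f : ι → α) (g : ι → γ) : Finset (ι × ι) :=
  {p ∈ s ×ˢ s | f p.1 < f p.2 ∧ g p.2 < g p.1}

lemma mem_discordantPairs [LT α] [LT γ] {s : Finset ι} {f : ι → α} {g : ι → γ} {p : ι × ι} :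
    p ∈ discordantPairs s f g ↔ (p.1 ∈ s ∧ p.2 ∈ s) ∧ f p.1 < f p.2 ∧ g p.2 < g p.1 := by
  simp only [discordantPairs, mem_filter, mem_product]

lemma card_discordantPairs_map [LT α] [LT γ] (s : Finset ι) (φ : ι ↪ κ) (f : κ → α) (g : κ → γ) :
    #(discordantPairs (s.map φ) f g) = #(discordantPairs s (f ∘ φ) (g ∘ φ)) := by
  rw [discordantPairs, ← prodMap_map_product, filter_map, card_map]
  rfl

/- If every pair is listed in the order given by `f`, the pairs discordant for `g` and `h` become
the symmetric difference of those discordant for `f` and `g` and those discordant for `f` and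
`h`. -/
lemma even_card_discordantPairs_add_add [LinearOrder α] [LinearOrder γ] [LinearOrder δ]
    {s : Finset ι} {f : ι → α} {g : ι → γ} {h : ι → δ}
    (hf : Set.InjOn f s) (hg : Set.InjOn g s) (hh : Set.InjOn h s) :
    Even (#(discordantPairs s f g) + #(discordantPairs s f h) + #(discordantPairs s g h)) := by
  set Dfg := discordantPairs s f g with hDfg
  set Dfh := discordantPairs s f h with hDfh
  set Dgh := discordantPairs s g h with hDgh
  have listed : {p ∈ Dgh | f p.1 < f p.2} = Dfh \ Dfg := by
    ext ⟨k, l⟩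
    simp only [hDfg, hDfh, hDgh, mem_filter, mem_sdiff, mem_discordantPairs]
    have : k ∈ s → l ∈ s → g k = g l → k = l := fun hk hl ↦ hg hk hl
    grind
  have reversed : #{p ∈ Dgh | ¬ f p.1 < f p.2} = #(Dfg \ Dfh) := by
    refine card_nbij' Prod.swap Prod.swap ?_ ?_ (fun _ _ ↦ rfl) (fun _ _ ↦ rfl)
    all_goals
      rintro ⟨k, l⟩
      simp only [hDfg, hDfh, hDgh, mem_filter, mem_sdiff, mem_coe, mem_discordantPairs, Prod.swap]
      have : k ∈ s → l ∈ s → f k = f l → k = l := fun hk hl ↦ hf hk hl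
      have : k ∈ s → l ∈ s → h k = h l → k = l := fun hk hl ↦ hh hk hl
      grind
  have hgh : #Dgh = #(Dfh \ Dfg) + #(Dfg \ Dfh) := by
    rw [← listed, ← reversed, card_filter_add_card_filter_not]
  have hfg := card_sdiff_add_card_inter Dfg Dfh
  have hfh := card_sdiff_add_card_inter Dfh Dfg
  rw [inter_comm] at hfh
  exact ⟨#Dgh + #(Dfg ∩ Dfh), by lia⟩

end DiscordantPairs

section Shuffles

variable {e f : ℕ}

/-- The Young subgroup `S_e × S_f` of `S_{e+f}`, as the homomorphism embedding it. -/
def blockPerm (e f : ℕ) :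
    Equiv.Perm (Fin e) × Equiv.Perm (Fin f) →* Equiv.Perm (Fin (e + f)) :=
  finSumFinEquiv.permCongrHom.toMonoidHom.comp (Equiv.Perm.sumCongrHom _ _)

@[simp]
lemma blockPerm_castAdd (p : Equiv.Perm (Fin e) × Equiv.Perm (Fin f)) (i : Fin e) :
    blockPerm e f p (Fin.castAdd f i) = Fin.castAdd f (p.1 i) := by
  simp [blockPerm]

@[simp]
lemma blockPerm_natAdd (p : Equiv.Perm (Fin e) × Equiv.Perm (Fin f)) (j : Fin f) :
    blockPerm e f p (Fin.natAdd e j) = Fin.natAdd e (p.2 j) := by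
  simp [blockPerm]

lemma apply_append {α γ : Type*} (g : α → γ) (u : Fin e → α) (v : Fin f → α) (k : Fin (e + f)) :
    g (Fin.append u v k) = Fin.append (fun i ↦ g (u i)) (fun j ↦ g (v j)) k := by
  induction k using Fin.addCases <;> simp

lemma append_comp_blockPerm {α : Type*} (u : Fin e → α) (v : Fin f → α)
    (p : Equiv.Perm (Fin e) × Equiv.Perm (Fin f)) :
    Fin.append u v ∘ blockPerm e f p = Fin.append (u ∘ p.1) (v ∘ p.2) := by
  funext k
  induction k using Fin.addCases <;> simp

lemma castAdd_lt_natAdd (i : Fin e) (j : Fin f) : Fin.castAdd f i < Fin.natAdd e j := by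
  simp only [Fin.lt_def, Fin.val_castAdd, Fin.val_natAdd]
  lia

lemma isShuffle_iff_strictMono (σ : Equiv.Perm (Fin (e + f))) :
    IsShuffle e f σ ↔
      StrictMono (⇑σ⁻¹ ∘ Fin.castAdd f) ∧ StrictMono (⇑σ⁻¹ ∘ Fin.natAdd e) := by
  refine ⟨fun ⟨hl, hr⟩ ↦ ⟨fun i j hij ↦ hl _ _ hij j.isLt,
    fun i j hij ↦ hr _ _ (by simpa using hij) (by simp)⟩, fun ⟨hl, hr⟩ ↦ ⟨fun k l hkl hle ↦ ?_,
    fun k l hkl hek ↦ ?_⟩⟩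
  · exact hl (a := ⟨k, (Fin.lt_def.1 hkl).trans hle⟩) (b := ⟨l, hle⟩) hkl
  · induction k using Fin.addCases with
    | left i => exact absurd i.isLt hek.not_gt
    | right i =>
      induction l using Fin.addCases with
      | left j => exact absurd hkl (castAdd_lt_natAdd j i).asymm
      | right j => exact hr (by simpa using hkl)

/- Sort the positions at which `τ` takes values in each of the two blocks. -/
lemma exists_eq_blockPerm_mul_isShuffle (τ : Equiv.Perm (Fin (e + f))) :
    ∃ p σ, IsShuffle e f σ ∧ τ = blockPerm e f p * σ := by
  set left : Fin e → Fin (e + f) := ⇑τ⁻¹ ∘ Fin.castAdd f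
  set right : Fin f → Fin (e + f) := ⇑τ⁻¹ ∘ Fin.natAdd e
  have hleft : StrictMono (left ∘ Tuple.sort left) :=
    (Tuple.monotone_sort left).strictMono_of_injective <|
      (τ⁻¹.injective.comp (Fin.castAdd_injective e f)).comp (Equiv.injective _)
  have hright : StrictMono (right ∘ Tuple.sort right) :=
    (Tuple.monotone_sort right).strictMono_of_injective <|
      (τ⁻¹.injective.comp (Fin.natAdd_injective f e)).comp (Equiv.injective _)
  set p := (Tuple.sort left, Tuple.sort right) with hp
  refine ⟨p, (blockPerm e f p)⁻¹ * τ, ?_, by simp⟩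
  rw [isShuffle_iff_strictMono]
  constructor
  · convert hleft using 1
    funext i
    simp [left, hp]
  · convert hright using 1
    funext j
    simp [right, hp]

lemma IsShuffle.eq_of_lt_iff_lt {σ τ : Equiv.Perm (Fin (e + f))} (hσ : IsShuffle e f σ)
    (hτ : IsShuffle e f τ) (hστ : ∀ k, (σ k : ℕ) < e ↔ (τ k : ℕ) < e) : σ = τ := by
  rw [isShuffle_iff_strictMono] at hσ hτ
  have range_left (π : Equiv.Perm (Fin (e + f))) :
      Set.range (⇑π⁻¹ ∘ Fin.castAdd f) = {k | (π k : ℕ) < e} := by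
    ext k
    simp only [Set.mem_range, Function.comp_apply, Equiv.Perm.inv_eq_iff_eq, Set.mem_ofPred_eq]
    induction π k using Fin.addCases with
    | left i => simp
    | right j => simpa using fun i ↦ (castAdd_lt_natAdd i j).ne
  have range_right (π : Equiv.Perm (Fin (e + f))) :
      Set.range (⇑π⁻¹ ∘ Fin.natAdd e) = {k | ¬ (π k : ℕ) < e} := by
    ext k
    simp only [Set.mem_range, Function.comp_apply, Equiv.Perm.inv_eq_iff_eq, Set.mem_ofPred_eq]
    induction π k using Fin.addCases with
    | left i => simpa using fun j ↦ (castAdd_lt_natAdd i j).ne'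
    | right j => simp
  have eq_left : ⇑σ⁻¹ ∘ Fin.castAdd f = ⇑τ⁻¹ ∘ Fin.castAdd f :=
    (hσ.1.range_inj hτ.1).1 (by simp only [range_left, hστ])
  have eq_right : ⇑σ⁻¹ ∘ Fin.natAdd e = ⇑τ⁻¹ ∘ Fin.natAdd e :=
    (hσ.2.range_inj hτ.2).1 (by simp only [range_right, hστ])
  refine inv_injective (Equiv.ext fun k ↦ ?_)
  induction k using Fin.addCases with
  | left i => exact congrFun eq_left i
  | right j => exact congrFun eq_right j

end Shuffles

section Rearrangements

variable {L : Type*} {d e f : ℕ}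

/-- The orbit of a word under place permutations. -/
def rearrangements (w : Fin d → L) : Finset (Fin d → L) :=
  univ.image fun σ : Equiv.Perm (Fin d) ↦ w ∘ σ

lemma mem_rearrangements {w u : Fin d → L} :
    u ∈ rearrangements w ↔ ∃ σ : Equiv.Perm (Fin d), w ∘ σ = u := by
  simp [rearrangements]

lemma range_eq_of_mem_rearrangements {w u : Fin d → L} (hu : u ∈ rearrangements w) :
    Set.range u = Set.range w := by
  obtain ⟨σ, rfl⟩ := mem_rearrangements.1 hu
  exact σ.surjective.range_comp w

lemma append_mem_range_iff_lt {u w : Fin e → L} {v x : Fin f → L} (hwx : ∀ i j, w i ≠ x j)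
    (hu : u ∈ rearrangements w) (hv : v ∈ rearrangements x) (k : Fin (e + f)) :
    Fin.append u v k ∈ Set.range w ↔ (k : ℕ) < e := by
  induction k using Fin.addCases with
  | left i =>
    rw [← range_eq_of_mem_rearrangements hu]
    simp
  | right j =>
    obtain ⟨π, rfl⟩ := mem_rearrangements.1 hv
    simpa using fun i ↦ hwx i (π j)

/- Separation makes the positions of the letters of `w` in a rearrangement of the concatenation
well defined, and these positions determine the shuffle. -/
lemma sum_rearrangements_append {M : Type*} [AddCommMonoid M] {w : Fin e → L} {x : Fin f → L}
    (hwx : ∀ i j, w i ≠ x j) (F : (Fin (e + f) → L) → M) :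
    ∑ y ∈ rearrangements (Fin.append w x), F y =
      ∑ u ∈ rearrangements w, ∑ v ∈ rearrangements x, ∑ σ with IsShuffle e f σ,
        F (Fin.append u v ∘ σ) := by
  simp only [← sum_product']
  symm
  refine sum_bij (fun t _ ↦ Fin.append t.1 t.2.1 ∘ t.2.2) ?_ ?_ ?_ fun _ _ ↦ rfl
  · rintro ⟨u, v, σ⟩ ht
    simp only [mem_product] at ht
    obtain ⟨hu, hv, -⟩ := ht
    obtain ⟨ρ, rfl⟩ := mem_rearrangements.1 hu
    obtain ⟨π, rfl⟩ := mem_rearrangements.1 hv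
    refine mem_rearrangements.2 ⟨blockPerm e f (ρ, π) * σ, ?_⟩
    rw [Equiv.Perm.coe_mul, ← Function.comp_assoc, append_comp_blockPerm]
  · rintro ⟨u, v, σ⟩ ht ⟨u', v', σ'⟩ ht' heq
    simp only [mem_product, mem_filter_univ] at ht ht' heq
    obtain ⟨hu, hv, hσ⟩ := ht
    obtain ⟨hu', hv', hσ'⟩ := ht'
    obtain rfl : σ = σ' := hσ.eq_of_lt_iff_lt hσ' fun k ↦ by
      rw [← append_mem_range_iff_lt hwx hu hv, ← append_mem_range_iff_lt hwx hu' hv']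
      exact iff_of_eq (congrArg (· ∈ Set.range w) (congrFun heq k))
    have huv : Fin.append u v = Fin.append u' v' := σ.surjective.injective_comp_right heq
    obtain ⟨rfl, rfl⟩ := Prod.ext_iff.1
      ((Fin.appendEquiv e f).injective (a₁ := (u, v)) (a₂ := (u', v')) huv)
    rfl
  · intro y hy
    obtain ⟨τ, rfl⟩ := mem_rearrangements.1 hy
    obtain ⟨p, σ, hσ, rfl⟩ := exists_eq_blockPerm_mul_isShuffle τ
    refine ⟨(w ∘ p.1, x ∘ p.2, σ), ?_, ?_⟩
    · simpa [mem_rearrangements] using hσ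
    · rw [Equiv.Perm.coe_mul, ← Function.comp_assoc, append_comp_blockPerm]

end Rearrangements

section Tensors

variable {P : GoodPair 𝕜 A β} (D : Tower 𝕜 A β n T P) (ord : LinearOrder (A × Fin n × Fin n))
  {d e f : ℕ}

/-- The pure tensor `ξ^{a_1}_{r_1,s_1} ⊗ ⋯ ⊗ ξ^{a_d}_{r_d,s_d}` of the word with letters
`(a_k, r_k, s_k)`. Keeping `𝐚`, `𝐫` and `𝐬` together makes the words ordinary words in the
alphabet `A × [1,n] × [1,n]`. -/
def tensor (w : Fin d → A × Fin n × Fin n) : T d :=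
  D.X (fun k ↦ (w k).1) (fun k ↦ (w k).2.1) (fun k ↦ (w k).2.2)

/-- `w ∈ Tri^H(n,d)`, for a word `w` of entry triples. -/
def IsTri (P : GoodPair 𝕜 A β) (w : Fin d → A × Fin n × Fin n) : Prop :=
  IsTriH P (fun k ↦ (w k).1) (fun k ↦ (w k).2.1) (fun k ↦ (w k).2.2)

/-- The positions of the odd letters of a word. -/
def oddPositions (P : GoodPair 𝕜 A β) (w : Fin d → A × Fin n × Fin n) : Finset (Fin d) :=
  {k | (w k).1 ∈ P.od}

/-- The number `⟨𝐚,𝐫,𝐬⟩`, for a word of entry triples. -/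
def oddInversions (P : GoodPair 𝕜 A β) (w : Fin d → A × Fin n × Fin n) : ℕ :=
  #(discordantPairs (oddPositions P w) id w)

/-- The element `ξ^𝐚_{𝐫,𝐬}`, for a word of entry triples. -/
def xi (w : Fin d → A × Fin n × Fin n) : T d :=
  ∑ u ∈ rearrangements w,
    (-1 : ℤ) ^ (oddInversions ord P w + oddInversions ord P u) • tensor D u

lemma mem_oddPositions {w : Fin d → A × Fin n × Fin n} {k : Fin d} :
    k ∈ oddPositions P w ↔ (w k).1 ∈ P.od :=
  mem_filter_univ k

lemma ang_eq_oddInversions (a : Fin d → A) (r s : Fin d → Fin n) :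
    ang P.od ord a r s = oddInversions ord P fun k ↦ (a k, r k, s k) := by
  refine congrArg card (ext fun p ↦ ?_)
  simp only [mem_filter_univ, mem_discordantPairs, mem_oddPositions, id]
  tauto

lemma xiH_eq_xi (a : Fin d → A) (r s : Fin d → Fin n) :
    xiH D ord a r s = xi D ord fun k ↦ (a k, r k, s k) := by
  refine sum_nbij' (fun t k ↦ (t.1 k, t.2.1 k, t.2.2 k))
    (fun u ↦ (fun k ↦ (u k).1, fun k ↦ (u k).2.1, fun k ↦ (u k).2.2)) ?_ ?_
    (fun _ _ ↦ rfl) (fun _ _ ↦ rfl) fun t _ ↦ ?_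
  · intro t ht
    obtain ⟨σ, -, rfl⟩ := mem_image.1 ht
    exact mem_rearrangements.2 ⟨σ, rfl⟩
  · intro u hu
    obtain ⟨σ, rfl⟩ := mem_rearrangements.1 hu
    exact mem_image.2 ⟨σ, mem_univ σ, rfl⟩
  · rw [ang_eq_oddInversions, ang_eq_oddInversions]
    rfl

lemma sgnc_eq_card_discordantPairs (σ : Equiv.Perm (Fin d)) (w : Fin d → A × Fin n × Fin n) :
    sgnc P.od σ (fun k ↦ (w k).1) = #(discordantPairs (oddPositions P w) id ⇑σ⁻¹) := by
  refine congrArg card (ext fun p ↦ ?_)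
  simp only [mem_filter_univ, mem_discordantPairs, mem_oddPositions, id]
  tauto

lemma oddInversions_comp (w : Fin d → A × Fin n × Fin n) (σ : Equiv.Perm (Fin d)) :
    oddInversions ord P (w ∘ σ) = #(discordantPairs (oddPositions P w) ⇑σ⁻¹ w) := by
  have map_odd : (oddPositions P (w ∘ σ)).map σ.toEmbedding = oddPositions P w := by
    ext k
    simp [mem_oddPositions]
  have inv_comp : ⇑σ⁻¹ ∘ σ = id := σ.symm_comp_self
  rw [← map_odd, card_discordantPairs_map, Equiv.coe_toEmbedding, inv_comp, oddInversions]

lemma IsTri.comp {w : Fin d → A × Fin n × Fin n} (hw : IsTri P w) {φ : Fin e → Fin d}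
    (hφ : φ.Injective) : IsTri P (w ∘ φ) :=
  ⟨fun k ↦ hw.1 (φ k), fun k l hkl ↦ hw.2 (φ k) (φ l) (hφ.ne hkl)⟩

lemma IsTri.append_left {w : Fin e → A × Fin n × Fin n} {x : Fin f → A × Fin n × Fin n}
    (hwx : IsTri P (Fin.append w x)) : IsTri P w := by
  simpa [Function.comp_def] using hwx.comp (Fin.castAdd_injective e f)

lemma IsTri.append_right {w : Fin e → A × Fin n × Fin n} {x : Fin f → A × Fin n × Fin n}
    (hwx : IsTri P (Fin.append w x)) : IsTri P x := by
  simpa [Function.comp_def] using hwx.comp (Fin.natAdd_injective f e)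

lemma IsTri.injOn_oddPositions {w : Fin d → A × Fin n × Fin n} (hw : IsTri P w) :
    Set.InjOn w (oddPositions P w) := by
  intro k hk l _ hkl
  by_contra hne
  have even : (w k).1 ∈ P.ev := hw.2 k l hne hkl
  have odd : (w k).1 ∈ P.od := mem_oddPositions.1 hk
  exact (hw.1 k).2 (Submodule.disjoint_def.1 P.compl.disjoint _ even odd)

lemma IsTri.neg_one_pow_sgnc {w : Fin d → A × Fin n × Fin n} (hw : IsTri P w)
    (σ : Equiv.Perm (Fin d)) :
    (-1 : ℤ) ^ sgnc P.od σ (fun k ↦ (w k).1) =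
      (-1) ^ (oddInversions ord P w + oddInversions ord P (w ∘ σ)) := by
  have h := even_card_discordantPairs_add_add (s := oddPositions P w)
    Function.injective_id.injOn σ⁻¹.injective.injOn hw.injOn_oddPositions
  rw [← sgnc_eq_card_discordantPairs, ← oddInversions_comp, add_assoc, Nat.even_add] at h
  exact neg_one_pow_congr h

lemma sgnc_blockPerm (od : Submodule 𝕜 A) (ρ : Equiv.Perm (Fin e)) (τ : Equiv.Perm (Fin f))
    (a : Fin e → A) (c : Fin f → A) :
    sgnc od (blockPerm e f (ρ, τ)) (Fin.append a c) = sgnc od ρ a + sgnc od τ c := by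
  have inv_left i : (blockPerm e f (ρ, τ))⁻¹ (Fin.castAdd f i) = Fin.castAdd f (ρ⁻¹ i) := by
    rw [← map_inv, blockPerm_castAdd, Prod.fst_inv]
  have inv_right j : (blockPerm e f (ρ, τ))⁻¹ (Fin.natAdd e j) = Fin.natAdd e (τ⁻¹ j) := by
    rw [← map_inv, blockPerm_natAdd, Prod.snd_inv]
  have castAdd_lt_castAdd (i j : Fin e) : Fin.castAdd f i < Fin.castAdd f j ↔ i < j := Iff.rfl
  have asymm (i : Fin e) (j : Fin f) : ¬ Fin.natAdd e j < Fin.castAdd f i :=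
    (castAdd_lt_natAdd i j).asymm
  simp only [sgnc, card_filter, Fintype.sum_prod_type, Fin.sum_univ_add, sum_add_distrib,
    Fin.append_left, Fin.append_right, inv_left, inv_right, castAdd_lt_natAdd, asymm,
    castAdd_lt_castAdd, Fin.natAdd_lt_natAdd_iff, true_and, false_and, if_false,
    sum_const_zero, add_zero, zero_add]

lemma act_tensor {w : Fin d → A × Fin n × Fin n} (hw : IsTri P w) (σ : Equiv.Perm (Fin d)) :
    D.act σ (tensor D w) =
      (-1 : ℤ) ^ (oddInversions ord P w + oddInversions ord P (w ∘ σ)) • tensor D (w ∘ σ) := by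
  rw [← hw.neg_one_pow_sgnc]
  exact D.act_X σ _ _ _ fun k ↦ (hw.1 k).1

lemma tensor_append (u : Fin e → A × Fin n × Fin n) (v : Fin f → A × Fin n × Fin n) :
    tensor D (Fin.append u v) =
      D.X (Fin.append (fun i ↦ (u i).1) fun j ↦ (v j).1)
        (Fin.append (fun i ↦ (u i).2.1) fun j ↦ (v j).2.1)
        (Fin.append (fun i ↦ (u i).2.2) fun j ↦ (v j).2.2) := by
  simp only [tensor, apply_append]

lemma star_tensor (u : Fin e → A × Fin n × Fin n) (v : Fin f → A × Fin n × Fin n) :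
    D.star (tensor D u) (tensor D v) =
      ∑ σ with IsShuffle e f σ, D.act σ (tensor D (Fin.append u v)) := by
  rw [tensor_append]
  exact D.star_X ..

lemma act_blockPerm_tensor_append {w : Fin e → A × Fin n × Fin n} {x : Fin f → A × Fin n × Fin n}
    (hwx : IsTri P (Fin.append w x)) (ρ : Equiv.Perm (Fin e)) (τ : Equiv.Perm (Fin f)) :
    D.act (blockPerm e f (ρ, τ)) (tensor D (Fin.append w x)) =
      ((-1 : ℤ) ^ (oddInversions ord P w + oddInversions ord P (w ∘ ρ)) *
          (-1) ^ (oddInversions ord P x + oddInversions ord P (x ∘ τ))) •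
        tensor D (Fin.append (w ∘ ρ) (x ∘ τ)) := by
  rw [act_tensor D ord hwx, ← hwx.neg_one_pow_sgnc, append_comp_blockPerm]
  simp only [apply_append, sgnc_blockPerm]
  rw [pow_add, hwx.append_left.neg_one_pow_sgnc ord, hwx.append_right.neg_one_pow_sgnc ord]

/- Summing over the shuffles merges the two orbit sums into one, and the signs agree because each
term is the image of `tensor D (Fin.append w x)` under the place permutation producing it. -/
lemma xi_append {w : Fin e → A × Fin n × Fin n} {x : Fin f → A × Fin n × Fin n}
    (hwx : IsTri P (Fin.append w x)) (hne : ∀ i j, w i ≠ x j) :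
    xi D ord (Fin.append w x) = D.star (xi D ord w) (xi D ord x) := by
  rw [xi, sum_rearrangements_append hne, xi, LinearMap.map_sum₂]
  simp only [xi, map_sum, map_zsmul, LinearMap.smul_apply, star_tensor, smul_sum, smul_smul]
  refine sum_congr rfl fun u hu ↦ sum_congr rfl fun v hv ↦ sum_congr rfl fun σ _ ↦ ?_
  obtain ⟨ρ, rfl⟩ := mem_rearrangements.1 hu
  obtain ⟨τ, rfl⟩ := mem_rearrangements.1 hv
  have split : Fin.append w x ∘ ⇑(blockPerm e f (ρ, τ) * σ) =
      Fin.append (w ∘ ρ) (x ∘ τ) ∘ σ := by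
    rw [Equiv.Perm.coe_mul, ← Function.comp_assoc, append_comp_blockPerm]
  rw [← split, ← act_tensor D ord hwx, ← D.act_act, act_blockPerm_tensor_append D ord hwx,
    map_zsmul, mul_comm]

lemma xi_of_isEmpty (w : Fin 0 → A × Fin n × Fin n) :
    xi D ord w = D.X Fin.elim0 Fin.elim0 Fin.elim0 := by
  have rearr : rearrangements w = {w} := by
    ext u
    simpa [mem_rearrangements, Subsingleton.elim u w] using ⟨1, rfl⟩
  have no_inv : oddInversions ord P w = 0 := by simp [oddInversions, discordantPairs]
  rw [xi, rearr, sum_singleton, no_inv, add_zero, pow_zero, one_smul, tensor]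
  congr <;> exact Subsingleton.elim _ _

end Tensors

section Concatenation

variable {α γ : Type} {q : ℕ}

/-- The words `w 0, …, w (q-1)` are `δ`-separated: no letter occurs in two of them. -/
def IsSeparated {sz : Fin q → ℕ} (w : ∀ m, Fin (sz m) → α) : Prop :=
  ∀ m l : Fin q, m ≠ l → ∀ (t : Fin (sz m)) (u : Fin (sz l)), w m t ≠ w l u

lemma concatB_succ (sz : Fin (q + 1) → ℕ) (w : ∀ m, Fin (sz m) → α) :
    concatB sz w =
      Fin.append (concatB (fun m ↦ sz m.castSucc) fun m ↦ w m.castSucc) (w (Fin.last q)) ∘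
        Fin.cast (Fin.sum_univ_castSucc sz) := by
  funext k
  rw [concatB, Function.comp_apply, Fin.cast_eq_cast]

@[simp]
lemma concatB_finSigmaFinEquiv (sz : Fin q → ℕ) (w : ∀ m, Fin (sz m) → α) (m : Fin q)
    (t : Fin (sz m)) : concatB sz w (finSigmaFinEquiv ⟨m, t⟩) = w m t := by
  induction q with
  | zero => exact m.elim0
  | succ q ih =>
    rw [concatB_succ, Function.comp_apply]
    induction m using Fin.lastCases with
    | last =>
      have position : (finSigmaFinEquiv ⟨Fin.last q, t⟩).cast (Fin.sum_univ_castSucc sz) =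
          Fin.natAdd (∑ m : Fin q, sz m.castSucc) t := by
        ext
        simp only [Fin.val_cast, Fin.val_natAdd, finSigmaFinEquiv_apply]
        rfl
      rw [position, Fin.append_right]
    | cast m =>
      have position : (finSigmaFinEquiv ⟨m.castSucc, t⟩).cast (Fin.sum_univ_castSucc sz) =
          Fin.castAdd (sz (Fin.last q))
            (finSigmaFinEquiv (n := fun m : Fin q ↦ sz m.castSucc) ⟨m, t⟩) := by
        ext
        simp [finSigmaFinEquiv_apply]
      rw [position, Fin.append_left, ih]

lemma apply_concatB (g : α → γ) {sz : Fin q → ℕ} (w : ∀ m, Fin (sz m) → α) (k : Fin (∑ m, sz m)) :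
    g (concatB sz w k) = concatB sz (fun m t ↦ g (w m t)) k := by
  obtain ⟨⟨m, t⟩, rfl⟩ := finSigmaFinEquiv.surjective k
  simp only [concatB_finSigmaFinEquiv]

lemma isTri_concatB {P : GoodPair 𝕜 A β} {sz : Fin q → ℕ} {w : ∀ m, Fin (sz m) → A × Fin n × Fin n}
    (hw : ∀ m, IsTri P (w m)) (hsep : IsSeparated w) : IsTri P (concatB sz w) := by
  refine ⟨fun k ↦ ?_, fun k l hkl heq ↦ ?_⟩
  · obtain ⟨⟨m, t⟩, rfl⟩ := finSigmaFinEquiv.surjective k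
    simpa only [concatB_finSigmaFinEquiv] using (hw m).1 t
  · obtain ⟨⟨m, t⟩, rfl⟩ := finSigmaFinEquiv.surjective k
    obtain ⟨⟨m', u⟩, rfl⟩ := finSigmaFinEquiv.surjective l
    simp only [concatB_finSigmaFinEquiv] at heq ⊢
    obtain rfl : m = m' := by
      by_contra hne
      exact hsep m m' hne t u heq
    exact (hw m).2 t u (fun htu ↦ hkl (by rw [htu])) heq

variable {P : GoodPair 𝕜 A β} (D : Tower 𝕜 A β n T P) (ord : LinearOrder (A × Fin n × Fin n))

lemma xi_comp_cast {d e : ℕ} (h : d = e) (w : Fin e → A × Fin n × Fin n) :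
    xi D ord (w ∘ Fin.cast h) = cast (congrArg T h.symm) (xi D ord w) := by
  subst h
  rfl

theorem xi_concatB {sz : Fin q → ℕ} {w : ∀ m, Fin (sz m) → A × Fin n × Fin n}
    (hw : ∀ m, IsTri P (w m)) (hsep : IsSeparated w) :
    xi D ord (concatB sz w) = starBlocks D q sz fun m ↦ xi D ord (w m) := by
  induction q with
  | zero =>
    rw [starBlocks, ← xi_of_isEmpty D ord Fin.elim0, ← xi_comp_cast D ord (Fin.sum_univ_zero sz)]
    congr 1
  | succ q ih =>
    have hwx : IsTri P (Fin.append (concatB (fun m : Fin q ↦ sz m.castSucc) fun m ↦ w m.castSucc)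
        (w (Fin.last q))) := by
      convert (isTri_concatB hw hsep).comp (Fin.cast_injective (Fin.sum_univ_castSucc sz).symm)
      rw [concatB_succ]
      rfl
    have hne i j : concatB (fun m : Fin q ↦ sz m.castSucc) (fun m ↦ w m.castSucc) i ≠
        w (Fin.last q) j := by
      obtain ⟨⟨m, t⟩, rfl⟩ := finSigmaFinEquiv.surjective i
      rw [concatB_finSigmaFinEquiv]
      exact hsep _ _ (Fin.castSucc_lt_last m).ne t j
    rw [concatB_succ, xi_comp_cast, xi_append D ord hwx hne, ih (fun m ↦ hw m.castSucc)
      fun m l hml ↦ hsep _ _ ((Fin.castSucc_injective q).ne hml), starBlocks]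

theorem xiH_concatB {sz : Fin q → ℕ} {a : ∀ m, Fin (sz m) → A} {r s : ∀ m, Fin (sz m) → Fin n}
    (htri : ∀ m, IsTriH P (a m) (r m) (s m))
    (hsep : IsSeparated fun m t ↦ (a m t, r m t, s m t)) :
    xiH D ord (concatB sz a) (concatB sz r) (concatB sz s) =
      starBlocks D q sz fun m ↦ xiH D ord (a m) (r m) (s m) := by
  simp only [xiH_eq_xi]
  rw [← xi_concatB D ord htri hsep]
  congr 1
  funext k
  obtain ⟨⟨m, t⟩, rfl⟩ := finSigmaFinEquiv.surjective k
  simp only [concatB_finSigmaFinEquiv]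

end Concatenation

section Multiplicities

variable {q : ℕ}

lemma mco_concatB {sz : Fin q → ℕ} (b : ∀ m, Fin (sz m) → β) (r s : ∀ m, Fin (sz m) → Fin n)
    (y : β × Fin n × Fin n) :
    mco (concatB sz b) (concatB sz r) (concatB sz s) y = ∑ m, mco (b m) (r m) (s m) y := by
  simp only [mco, card_filter]
  rw [← finSigmaFinEquiv.sum_comp, Fintype.sum_sigma]
  simp only [concatB_finSigmaFinEquiv]

lemma mco_concatB_of_isSeparated {sz : Fin q → ℕ} {b : ∀ m, Fin (sz m) → β}
    {r s : ∀ m, Fin (sz m) → Fin n} (hsep : IsSeparated fun m t ↦ (b m t, r m t, s m t))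
    (m : Fin q) (t : Fin (sz m)) :
    mco (concatB sz b) (concatB sz r) (concatB sz s) (b m t, r m t, s m t) =
      mco (b m) (r m) (s m) (b m t, r m t, s m t) := by
  rw [mco_concatB]
  refine sum_eq_single_of_mem m (mem_univ m) fun l _ hlm ↦ ?_
  exact card_eq_zero.2 (filter_eq_empty_iff.2 fun u _ ↦ hsep l m hlm u t)

lemma facSel_concatB (sel : β → Prop) {sz : Fin q → ℕ} {b : ∀ m, Fin (sz m) → β}
    {r s : ∀ m, Fin (sz m) → Fin n} (hsep : IsSeparated fun m t ↦ (b m t, r m t, s m t)) :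
    facSel sel (concatB sz b) (concatB sz r) (concatB sz s) =
      ∏ m, facSel sel (b m) (r m) (s m) := by
  have letters : (univ.image fun k ↦ (concatB sz b k, concatB sz r k, concatB sz s k)) =
      univ.biUnion fun m ↦ univ.image fun t ↦ (b m t, r m t, s m t) := by
    ext y
    simp only [mem_image, mem_biUnion, mem_univ, true_and]
    rw [finSigmaFinEquiv.surjective.exists, Sigma.exists]
    simp only [concatB_finSigmaFinEquiv]
  rw [facSel, letters, filter_biUnion, prod_biUnion]
  · refine prod_congr rfl fun m _ ↦ prod_congr rfl fun y hy ↦ ?_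
    obtain ⟨t, -, rfl⟩ := mem_image.1 (mem_filter.1 hy).1
    rw [mco_concatB_of_isSeparated hsep]
  · intro m _ l _ hml
    refine disjoint_filter_filter (disjoint_left.2 fun y hm hl ↦ ?_)
    obtain ⟨t, -, rfl⟩ := mem_image.1 hm
    obtain ⟨u, -, hu⟩ := mem_image.1 hl
    exact hsep m l hml t u hu.symm

variable {P : GoodPair 𝕜 A β} (D : Tower 𝕜 A β n T P) (ord : LinearOrder (A × Fin n × Fin n))

lemma cast_nsmul {d e : ℕ} (h : d = e) (c : ℕ) (x : T d) :
    cast (congrArg T h) (c • x) = c • cast (congrArg T h) x := by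
  subst h
  rfl

lemma starBlocks_nsmul (sz : Fin q → ℕ) (c : Fin q → ℕ) (x : ∀ m, T (sz m)) :
    starBlocks D q sz (fun m ↦ c m • x m) = (∏ m, c m) • starBlocks D q sz x := by
  induction q with
  | zero => simp [starBlocks]
  | succ q ih =>
    rw [starBlocks, ih, map_nsmul, map_nsmul, LinearMap.smul_apply, smul_smul,
      cast_nsmul (Fin.sum_univ_castSucc sz).symm, Fin.prod_univ_castSucc, mul_comm, starBlocks]

theorem eta_concatB {sz : Fin q → ℕ} {b : ∀ m, Fin (sz m) → β} {r s : ∀ m, Fin (sz m) → Fin n}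
    (htri : ∀ m, IsTriH P (fun t ↦ P.bas (b m t)) (r m) (s m))
    (hsep : IsSeparated fun m t ↦ (P.bas (b m t), r m t, s m t)) :
    eta D ord (concatB sz b) (concatB sz r) (concatB sz s) =
      starBlocks D q sz fun m ↦ eta D ord (b m) (r m) (s m) := by
  have hsep' : IsSeparated fun m t ↦ (b m t, r m t, s m t) := fun m l hml t u heq ↦
    hsep m l hml t u (congrArg (fun y : β × Fin n × Fin n ↦ (P.bas y.1, y.2)) heq)
  simp only [eta, xiB, starBlocks_nsmul, apply_concatB]
  rw [facSel_concatB _ hsep', xiH_concatB D ord htri hsep]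

end Multiplicities

theorem statement8_general (P : GoodPair 𝕜 A β) (D : Tower 𝕜 A β n T P)
    (ord : LinearOrder (A × Fin n × Fin n)) (q : ℕ) (sz : Fin q → ℕ)
    (a : ∀ m, Fin (sz m) → A) (r s : ∀ m, Fin (sz m) → Fin n)
    (htri : ∀ m, IsTriH P (a m) (r m) (s m))
    (hsep : IsSeparated fun m t ↦ (a m t, r m t, s m t)) :
    (xiH D ord (concatB sz a) (concatB sz r) (concatB sz s)
      = starBlocks D q sz fun m ↦ xiH D ord (a m) (r m) (s m)) ∧
    (∀ bw : ∀ m, Fin (sz m) → β, (∀ m k, a m k = P.bas (bw m k)) →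
      eta D ord (concatB sz bw) (concatB sz r) (concatB sz s)
        = starBlocks D q sz fun m ↦ eta D ord (bw m) (r m) (s m)) := by
  refine ⟨xiH_concatB D ord htri hsep, fun bw hbw ↦ ?_⟩
  obtain rfl : a = fun m k ↦ P.bas (bw m k) := by
    funext m k
    exact hbw m k
  exact eta_concatB D ord htri hsep

/-- Let `d = d_1 + ⋯ + d_q`, let `(𝐚^{(m)},𝐫^{(m)},𝐬^{(m)}) ∈ Tri^H(n,d_m)`
and let `(𝐚,𝐫,𝐬)` be the concatenation.  If `(𝐚,𝐫,𝐬)` is `δ`-separated then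
`ξ^𝐚_{𝐫,𝐬} = ξ^{𝐚^{(1)}}_{𝐫^{(1)},𝐬^{(1)}} * ⋯ * ξ^{𝐚^{(q)}}_{𝐫^{(q)},𝐬^{(q)}}`, and if
moreover all entries of the `𝐚^{(m)}` are basis elements (entries of `B`), then also
`η^𝐚_{𝐫,𝐬} = η^{𝐚^{(1)}}_{𝐫^{(1)},𝐬^{(1)}} * ⋯ * η^{𝐚^{(q)}}_{𝐫^{(q)},𝐬^{(q)}}`. -/
theorem statement8 {𝕜 A β : Type} [CommRing 𝕜] [IsDomain 𝕜] [CharZero 𝕜]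
    [NonUnitalRing A] [Module 𝕜 A] [SMulCommClass 𝕜 A A] [IsScalarTower 𝕜 A A]
    {n : ℕ} (hn : 0 < n) {T : ℕ → Type} [∀ e, NonUnitalRing (T e)] [∀ e, Module 𝕜 (T e)]
    (P : GoodPair 𝕜 A β) (D : Tower 𝕜 A β n T P) (ord : LinearOrder (A × Fin n × Fin n))
    (q : ℕ) (sz : Fin q → ℕ)
    (a : ∀ m, Fin (sz m) → A) (r s : ∀ m, Fin (sz m) → Fin n)
    (htri : ∀ m, IsTriH P (a m) (r m) (s m))
    (hsep : ∀ m l : Fin q, m ≠ l → ∀ (t : Fin (sz m)) (u : Fin (sz l)),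
      (a m t, r m t, s m t) ≠ (a l u, r l u, s l u)) :
    (xiH D ord (concatB sz a) (concatB sz r) (concatB sz s)
      = starBlocks D q sz fun m => xiH D ord (a m) (r m) (s m)) ∧
    (∀ bw : ∀ m, Fin (sz m) → β, (∀ m k, a m k = P.bas (bw m k)) →
      eta D ord (concatB sz bw) (concatB sz r) (concatB sz s)
        = starBlocks D q sz fun m => eta D ord (bw m) (r m) (s m)) := by
  exact statement8_general P D ord q sz a r s htri hsep
end GS
end
end

section
/- Let Y := span_𝕜(ξ^b_{r,s} : r,s ∈ [1,n], b ∈ B_𝔠 ⊔ B_1) ⊆ M_n(A), and for e ≥ 0 let Star^e Y := Y * Y * ⋯ * Y (e factors) ⊆ M_n(A)^{⊗e}. Then T^A_𝔞(n,d) = ⊕_{e=0}^d S^𝔞(n,d−e) * Star^e Y, where S^𝔞(n,d−e) := (M_n(𝔞)^{⊗(d−e)})^{S_{d−e}} ⊆ S^A(n,d−e). -/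
open Finset

open scoped Classical TensorProduct

noncomputable section

namespace GS

variable {𝕜 A β : Type} [CommRing 𝕜] [NonUnitalRing A] [Module 𝕜 A]

variable {n : ℕ} {T : ℕ → Type} [∀ e, NonUnitalRing (T e)] [∀ e, Module 𝕜 (T e)]

/-- The `*`-product of two `𝕜`-submodules. -/
def starSub {𝕜 A β : Type} [CommRing 𝕜] [NonUnitalRing A] [Module 𝕜 A]
    {n : ℕ} {T : ℕ → Type} [∀ e, NonUnitalRing (T e)] [∀ e, Module 𝕜 (T e)]
    {P : GoodPair 𝕜 A β} (D : Tower 𝕜 A β n T P) {e f : ℕ}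
    (U : Submodule 𝕜 (T e)) (V : Submodule 𝕜 (T f)) : Submodule 𝕜 (T (e + f)) :=
  Submodule.span 𝕜 {z | ∃ u ∈ U, ∃ v ∈ V, z = D.star u v}

/-- `Y := span(ξ^b_{r,s} : r,s ∈ [1,n], b ∈ B_𝔠 ⊔ B_1) ⊆ M_n(A) = M_n(A)^{⊗1}`. -/
def Ysub {𝕜 A β : Type} [CommRing 𝕜] [NonUnitalRing A] [Module 𝕜 A]
    {n : ℕ} {T : ℕ → Type} [∀ e, NonUnitalRing (T e)] [∀ e, Module 𝕜 (T e)]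
    {P : GoodPair 𝕜 A β} (D : Tower 𝕜 A β n T P) : Submodule 𝕜 (T 1) :=
  Submodule.span 𝕜 {x | ∃ (i : β) (r s : Fin n), P.part i ≠ 0 ∧
    x = D.X (fun _ => P.bas i) (fun _ => r) (fun _ => s)}

/-- `Star^e Y = Y * ⋯ * Y` (`e` factors); `Star^0 Y` is the degree-zero line `𝕜 ⊆ ⊕_d M_n(A)^{⊗d}`. -/
def starPow {𝕜 A β : Type} [CommRing 𝕜] [NonUnitalRing A] [Module 𝕜 A]
    {n : ℕ} {T : ℕ → Type} [∀ e, NonUnitalRing (T e)] [∀ e, Module 𝕜 (T e)]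
    {P : GoodPair 𝕜 A β} (D : Tower 𝕜 A β n T P) : ∀ e : ℕ, Submodule 𝕜 (T e)
  | 0 => Submodule.span 𝕜 {D.X Fin.elim0 Fin.elim0 Fin.elim0}
  | (e + 1) => starSub D (starPow D e) (Ysub D)

/-!
The idea is to compute the `*`-product of spanning elements. A word of letters `(b,r,s)` encodes a
pure tensor of basis elements. The invariants `S^𝔞(n,m)` are spanned by the plain orbit sums of
words `u` with letters in `B_𝔞`, and `Star^e Y` is spanned by the sums of all `S_e`-translates of
words `v` with letters outside `B_𝔞`. Every element of `S_{m+e}` factors uniquely as an element of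
`S_m × S_e` times a shuffle, so the product of two such elements is a signed sum over the orbit of
the concatenation `uv`, in which every word occurs `|Stab(uv)| / |Stab(u)|` times. If no odd letter
of `v` is repeated, this index is the product `[uv]^!_𝔠` of the factorials of the multiplicities of
the letters from `B_𝔠`, so the product is `η` of the word `uv`. If an odd letter of `v` is repeated,
transposing two of its occurrences shows that the sum of the translates of `v` vanishes.

Sorting the letters of a word shows that every `η` arises in this way up to sign, so the summands
span `T^A_𝔞(n,d)`. They are independent since the number of letters outside `B_𝔞` defines a
grading of `M_n(A)^{⊗d}` in which the `e`-th summand has degree `e`.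
-/

lemma iSupIndep_span_image_fiber {R M ι κ : Type*} [Ring R] [AddCommGroup M] [Module R M]
    {v : ι → M} (hv : LinearIndependent R v) (f : ι → κ) :
    iSupIndep fun j => Submodule.span R (v '' {i | f i = j}) := by
  intro j
  rw [← Submodule.span_iUnion₂, ← Set.image_iUnion₂]
  refine hv.disjoint_span_image (Set.disjoint_left.2 fun i hi hi' => ?_)
  obtain ⟨j', hj', rfl⟩ := Set.mem_iUnion₂.1 hi'
  exact hj' hi

section Words

variable {X M : Type*} {d m e : ℕ}

/-- The orbit of a word under place permutations. -/
def wordOrbit (w : Fin d → X) : Finset (Fin d → X) :=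
  univ.image fun σ : Equiv.Perm (Fin d) => w ∘ σ

/-- The order of the stabilizer of a word under place permutations. -/
def stabCard (w : Fin d → X) : ℕ :=
  #{σ : Equiv.Perm (Fin d) | w ∘ σ = w}

/-- The number of occurrences of the letter `x` in the word `w`. -/
def letterMult (w : Fin d → X) (x : X) : ℕ :=
  #{k | w k = x}

/-- The product of the factorials of the multiplicities in `w` of the letters satisfying `p`. -/
def letterFactorial (p : X → Prop) (w : Fin d → X) : ℕ :=
  ∏ x ∈ univ.image w with p x, (letterMult w x).factorial

lemma mem_wordOrbit {w w' : Fin d → X} :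
    w' ∈ wordOrbit w ↔ ∃ σ : Equiv.Perm (Fin d), w ∘ σ = w' := by
  simp [wordOrbit]

lemma comp_perm_mem_wordOrbit (w : Fin d → X) (σ : Equiv.Perm (Fin d)) :
    w ∘ σ ∈ wordOrbit w :=
  mem_wordOrbit.2 ⟨σ, rfl⟩

lemma self_mem_wordOrbit (w : Fin d → X) : w ∈ wordOrbit w :=
  comp_perm_mem_wordOrbit w 1

lemma wordOrbit_comp_perm (w : Fin d → X) (ρ : Equiv.Perm (Fin d)) :
    wordOrbit (w ∘ ρ) = wordOrbit w := by
  ext w'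
  simp only [mem_wordOrbit]
  exact (Equiv.mulLeft ρ).exists_congr fun σ => Iff.rfl

lemma sum_wordOrbit_comp_perm [AddCommMonoid M] (F : (Fin d → X) → M) (w : Fin d → X)
    (ρ : Equiv.Perm (Fin d)) :
    ∑ w' ∈ wordOrbit w, F (w' ∘ ρ) = ∑ w' ∈ wordOrbit w, F w' := by
  have mem_iff (w' : Fin d → X) : w' ∈ wordOrbit w ↔ w' ∘ ρ ∈ wordOrbit w := by
    simp only [mem_wordOrbit]
    refine (Equiv.mulRight ρ).exists_congr fun σ => ?_
    exact (ρ.surjective.injective_comp_right.eq_iff (a := w ∘ σ)).symm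
  exact sum_equiv (ρ.symm.arrowCongr (Equiv.refl X)) mem_iff fun _ _ => rfl

lemma stabCard_ne_zero (w : Fin d → X) : stabCard w ≠ 0 :=
  card_ne_zero.2 ⟨1, mem_filter.2 ⟨mem_univ _, rfl⟩⟩

lemma card_comp_perm_eq (w : Fin d → X) (ρ : Equiv.Perm (Fin d)) :
    #{σ : Equiv.Perm (Fin d) | w ∘ σ = w ∘ ρ} = stabCard w := by
  refine card_equiv (Equiv.mulRight ρ⁻¹) fun σ => ?_
  simp only [mem_filter_univ]
  exact (Equiv.comp_symm_eq ρ w (w ∘ σ)).symm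

lemma sum_comp_perm [AddCommMonoid M] (F : (Fin d → X) → M) (w : Fin d → X) :
    ∑ σ : Equiv.Perm (Fin d), F (w ∘ σ) = stabCard w • ∑ w' ∈ wordOrbit w, F w' := by
  rw [sum_comp F fun σ : Equiv.Perm (Fin d) => w ∘ σ, smul_sum]
  refine sum_congr rfl fun w' hw' => ?_
  obtain ⟨ρ, -, rfl⟩ := mem_image.1 hw'
  rw [card_comp_perm_eq]

lemma sum_smul_mem_span_wordOrbit {R : Type*} [Semiring R] [AddCommMonoid M] [Module R M]
    (s : Finset (Fin d → X)) (hs : ∀ w ∈ s, wordOrbit w ⊆ s) (F : (Fin d → X) → M)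
    (c : (Fin d → X) → R) (hc : ∀ w ∈ s, ∀ σ : Equiv.Perm (Fin d), c (w ∘ σ) = c w) :
    ∑ w ∈ s, c w • F w ∈ Submodule.span R ((fun w => ∑ w' ∈ wordOrbit w, F w') '' s) := by
  have orbit_eq {w w' : Fin d → X} : wordOrbit w' = wordOrbit w ↔ w' ∈ wordOrbit w := by
    refine ⟨fun h => h ▸ self_mem_wordOrbit w', fun h => ?_⟩
    obtain ⟨σ, rfl⟩ := mem_wordOrbit.1 h
    exact wordOrbit_comp_perm w σ
  rw [← sum_fiberwise_of_maps_to fun w hw => mem_image_of_mem wordOrbit hw]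
  refine Submodule.sum_mem _ fun o ho => ?_
  obtain ⟨w, hw, rfl⟩ := mem_image.1 ho
  have filter_eq : {w' ∈ s | wordOrbit w' = wordOrbit w} = wordOrbit w := by
    ext w'
    rw [mem_filter, orbit_eq, and_iff_right_of_imp fun h => hs w hw h]
  have sum_eq : ∑ w' ∈ wordOrbit w, c w' • F w' = c w • ∑ w' ∈ wordOrbit w, F w' := by
    rw [smul_sum]
    refine sum_congr rfl fun w' hw' => ?_
    obtain ⟨σ, rfl⟩ := mem_wordOrbit.1 hw'
    rw [hc w hw]
  rw [filter_eq, sum_eq]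
  exact Submodule.smul_mem _ _ (Submodule.subset_span ⟨w, hw, rfl⟩)

lemma stabCard_eq_prod_factorial (w : Fin d → X) :
    stabCard w = ∏ x ∈ univ.image w, (letterMult w x).factorial := by
  simpa only [stabCard, letterMult, Fintype.card_subtype] using DomMulAct.stabilizer_card' w

lemma stabCard_eq_letterFactorial_mul (p : X → Prop) (w : Fin d → X) :
    stabCard w = letterFactorial p w * letterFactorial (fun x => ¬ p x) w := by
  rw [stabCard_eq_prod_factorial, letterFactorial, letterFactorial]
  convert (prod_filter_mul_prod_filter_not (univ.image w) p _).symm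

lemma letterFactorial_comp_perm (p : X → Prop) (w : Fin d → X) (ρ : Equiv.Perm (Fin d)) :
    letterFactorial p (w ∘ ρ) = letterFactorial p w := by
  have image_eq : univ.image (w ∘ ρ) = univ.image w := by
    rw [← image_image, image_univ_equiv]
  have mult_eq (x : X) : letterMult (w ∘ ρ) x = letterMult w x :=
    card_equiv ρ fun k => by simp
  simp only [letterFactorial, image_eq, mult_eq]

lemma letterFactorial_eq_of_imp {p q : X → Prop} (hqp : ∀ x, q x → p x) {w : Fin d → X}
    (hw : ∀ k l, k ≠ l → w k = w l → p (w k) → q (w k)) :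
    letterFactorial p w = letterFactorial q w := by
  refine (prod_subset (monotone_filter_right _ fun x _ => hqp x) fun x hx hx' => ?_).symm
  obtain ⟨hxw, hpx⟩ := mem_filter.1 hx
  have hqx : ¬ q x := fun h => hx' (mem_filter.2 ⟨hxw, h⟩)
  refine Nat.factorial_eq_one.2 (card_le_one.2 fun k hk l hl => ?_)
  rw [mem_filter_univ] at hk hl
  by_contra hkl
  exact hqx (hk ▸ hw k l hkl (hk.trans hl.symm) (hk ▸ hpx))

lemma letterMult_append (u : Fin m → X) (v : Fin e → X) (x : X) :
    letterMult (Fin.append u v) x = letterMult u x + letterMult v x := by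
  simp only [letterMult, card_filter, Fin.sum_univ_add, Fin.append_left, Fin.append_right]

lemma letterFactorial_append {p : X → Prop} {u : Fin m → X} {v : Fin e → X}
    (hu : ∀ k, p (u k)) (hv : ∀ k, ¬ p (v k)) :
    letterFactorial p (Fin.append u v) = stabCard u := by
  have filter_eq : {x ∈ univ.image (Fin.append u v) | p x} = univ.image u := by
    ext x
    simp only [mem_filter, mem_image, mem_univ, true_and]
    constructor
    · rintro ⟨⟨k, rfl⟩, hk⟩
      induction k using Fin.addCases with
      | left k => exact ⟨k, (Fin.append_left u v k).symm⟩
      | right k => exact absurd (Fin.append_right u v k ▸ hk) (hv k)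
    · rintro ⟨k, rfl⟩
      exact ⟨⟨Fin.castAdd e k, Fin.append_left u v k⟩, hu k⟩
  rw [letterFactorial, filter_eq, stabCard_eq_prod_factorial]
  refine prod_congr rfl fun x hx => ?_
  obtain ⟨k, -, rfl⟩ := mem_image.1 hx
  have mult_v : letterMult v (u k) = 0 :=
    card_eq_zero.2 (filter_eq_empty_iff.2 fun l _ h => hv l (h ▸ hu k))
  rw [letterMult_append, mult_v, add_zero]

lemma exists_comp_equiv_eq_append (p : X → Prop) (w : Fin d → X) :
    ∃ (m e : ℕ) (u : Fin m → X) (v : Fin e → X) (ρ : Fin (m + e) ≃ Fin d),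
      w ∘ ρ = Fin.append u v ∧ (∀ k, p (u k)) ∧ ∀ k, ¬ p (v k) := by
  let positions := Fintype.equivFin {k // p (w k)}
  let positions' := Fintype.equivFin {k // ¬ p (w k)}
  refine ⟨_, _, fun k => w (positions.symm k), fun k => w (positions'.symm k),
    finSumFinEquiv.symm.trans
      ((Equiv.sumCongr positions.symm positions'.symm).trans (Equiv.sumCompl fun k => p (w k))),
    funext fun k => ?_, fun k => (positions.symm k).2, fun k => (positions'.symm k).2⟩
  induction k using Fin.addCases <;> simp

end Words

section Shuffles

variable {X M : Type*} {m e : ℕ}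

/-- The image of `(α, γ)` under the embedding of `S_m × S_e` into `S_{m+e}` as a Young subgroup. -/
def permAppend (α : Equiv.Perm (Fin m)) (γ : Equiv.Perm (Fin e)) : Equiv.Perm (Fin (m + e)) :=
  finSumFinEquiv.permCongr (Equiv.sumCongr α γ)

@[simp]
lemma permAppend_castAdd (α : Equiv.Perm (Fin m)) (γ : Equiv.Perm (Fin e)) (k : Fin m) :
    permAppend α γ (Fin.castAdd e k) = Fin.castAdd e (α k) := by
  simp [permAppend, Equiv.permCongr_apply]

@[simp]
lemma permAppend_natAdd (α : Equiv.Perm (Fin m)) (γ : Equiv.Perm (Fin e)) (k : Fin e) :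
    permAppend α γ (Fin.natAdd m k) = Fin.natAdd m (γ k) := by
  simp [permAppend, Equiv.permCongr_apply]

lemma permAppend_inv (α : Equiv.Perm (Fin m)) (γ : Equiv.Perm (Fin e)) :
    (permAppend α γ)⁻¹ = permAppend α⁻¹ γ⁻¹ :=
  rfl

lemma append_comp_permAppend (u : Fin m → X) (v : Fin e → X) (α : Equiv.Perm (Fin m))
    (γ : Equiv.Perm (Fin e)) :
    Fin.append u v ∘ permAppend α γ = Fin.append (u ∘ α) (v ∘ γ) := by
  funext k
  induction k using Fin.addCases <;> simp

lemma isShuffle_iff {σ : Equiv.Perm (Fin (m + e))} :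
    IsShuffle m e σ ↔
      StrictMono (⇑σ⁻¹ ∘ Fin.castAdd e) ∧ StrictMono (⇑σ⁻¹ ∘ Fin.natAdd m) := by
  refine and_congr ⟨fun h k l hkl => h _ _ hkl l.isLt, fun h k l hkl hl => ?_⟩
    ⟨fun h k l hkl => h _ _ ((Fin.natAdd_lt_natAdd_iff m).2 hkl) (Nat.le_add_right m k),
      fun h k l hkl hk => ?_⟩
  · have hk : (k : ℕ) < m := lt_trans hkl hl
    exact @h ⟨k, hk⟩ ⟨l, hl⟩ hkl
  · have hl : m ≤ l := hk.trans (Fin.le_def.1 hkl.le)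
    induction k using Fin.addCases with
    | left k => exact absurd hk k.isLt.not_ge
    | right k =>
      induction l using Fin.addCases with
      | left l => exact absurd hl l.isLt.not_ge
      | right l => exact h ((Fin.natAdd_lt_natAdd_iff m).1 hkl)

lemma strictMono_comp_iff_eq_sort {Y : Type*} [LinearOrder Y] {f : Fin m → Y}
    (hf : Function.Injective f) {α : Equiv.Perm (Fin m)} :
    StrictMono (f ∘ α) ↔ α = Tuple.sort f := by
  rw [Tuple.eq_sort_iff]
  refine ⟨fun h => ⟨h.monotone, fun i j hij heq => ?_⟩, fun h => ?_⟩
  · exact absurd (α.injective (hf heq)) hij.ne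
  · exact h.1.strictMono_of_injective (hf.comp α.injective)

lemma isShuffle_permAppend_inv_mul_iff {α : Equiv.Perm (Fin m)} {γ : Equiv.Perm (Fin e)}
    {τ : Equiv.Perm (Fin (m + e))} :
    IsShuffle m e ((permAppend α γ)⁻¹ * τ) ↔
      α = Tuple.sort (⇑τ⁻¹ ∘ Fin.castAdd e) ∧ γ = Tuple.sort (⇑τ⁻¹ ∘ Fin.natAdd m) := by
  have comp_castAdd : ⇑((permAppend α γ)⁻¹ * τ)⁻¹ ∘ Fin.castAdd e = (⇑τ⁻¹ ∘ Fin.castAdd e) ∘ α := by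
    funext k
    simp
  have comp_natAdd : ⇑((permAppend α γ)⁻¹ * τ)⁻¹ ∘ Fin.natAdd m = (⇑τ⁻¹ ∘ Fin.natAdd m) ∘ γ := by
    funext k
    simp
  rw [isShuffle_iff, comp_castAdd, comp_natAdd,
    strictMono_comp_iff_eq_sort (τ⁻¹.injective.comp (Fin.castAdd_injective m e)),
    strictMono_comp_iff_eq_sort (τ⁻¹.injective.comp (Fin.natAdd_injective e m))]

lemma sum_permAppend_mul_shuffle [AddCommMonoid M] (Φ : Equiv.Perm (Fin (m + e)) → M) :
    ∑ α, ∑ γ, ∑ σ with IsShuffle m e σ, Φ (permAppend α γ * σ) = ∑ τ, Φ τ := by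
  have reindex (α : Equiv.Perm (Fin m)) (γ : Equiv.Perm (Fin e)) :
      ∑ σ with IsShuffle m e σ, Φ (permAppend α γ * σ)
        = ∑ τ, if IsShuffle m e ((permAppend α γ)⁻¹ * τ) then Φ τ else 0 := by
    rw [sum_filter]
    exact Fintype.sum_equiv (Equiv.mulLeft (permAppend α γ)) _ _ fun σ => by simp
  simp only [reindex, isShuffle_permAppend_inv_mul_iff]
  rw [← Fintype.sum_prod_type', sum_comm]
  refine sum_congr rfl fun τ _ => ?_
  simp only [Fintype.sum_prod_type, ite_and, sum_ite_irrel, sum_const_zero, sum_ite_eq', mem_univ,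
    if_true]

lemma stabCard_smul_sum_wordOrbit_shuffle [AddCommMonoid M] (F : (Fin (m + e) → X) → M)
    (u : Fin m → X) (v : Fin e → X) :
    stabCard u • ∑ u' ∈ wordOrbit u, ∑ γ : Equiv.Perm (Fin e), ∑ σ with IsShuffle m e σ,
        F (Fin.append u' (v ∘ γ) ∘ σ)
      = stabCard (Fin.append u v) • ∑ w ∈ wordOrbit (Fin.append u v), F w := by
  rw [← sum_comp_perm (fun u' => ∑ γ : Equiv.Perm (Fin e), ∑ σ with IsShuffle m e σ,
        F (Fin.append u' (v ∘ γ) ∘ σ)), ← sum_comp_perm, ← sum_permAppend_mul_shuffle]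
  simp only [← append_comp_permAppend, Equiv.Perm.coe_mul, Function.comp_assoc]

lemma sum_wordOrbit_shuffle [AddCommMonoid M] (F : (Fin (m + e) → X) → M)
    {u : Fin m → X} {v : Fin e → X} {c : ℕ}
    (h : stabCard (Fin.append u v) = stabCard u * c) :
    ∑ u' ∈ wordOrbit u, ∑ γ : Equiv.Perm (Fin e), ∑ σ with IsShuffle m e σ,
        F (Fin.append u' (v ∘ γ) ∘ σ)
      = c • ∑ w ∈ wordOrbit (Fin.append u v), F w := by
  -- `M` may have torsion, so `stabCard u` is cancelled in the free commutative monoid on words.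
  have free_case := stabCard_smul_sum_wordOrbit_shuffle (fun w => Finsupp.single w (1 : ℕ)) u v
  rw [h, mul_smul] at free_case
  have := congrArg (Finsupp.liftAddHom fun w => (multiplesHom M (F w)))
    (nsmul_right_injective (stabCard_ne_zero u) free_case)
  simpa only [map_sum, map_nsmul, Finsupp.liftAddHom_apply_single, multiplesHom_apply,
    one_nsmul] using this

end Shuffles

section Parity

variable {d : ℕ}

lemma card_filter_lt_and (q : Fin d × Fin d → Prop) [DecidablePred q] :
    #{p : Fin d × Fin d | p.1 < p.2 ∧ q p}
      = ∑ p : Fin d × Fin d with p.1 < p.2, if q p then 1 else 0 := by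
  rw [← filter_filter, card_filter]

lemma sum_lt_comp_perm {M : Type*} [AddCommMonoid M] (σ : Equiv.Perm (Fin d))
    (g : Fin d → Fin d → M) :
    ∑ p : Fin d × Fin d with p.1 < p.2, g (σ p.1) (σ p.2)
      = ∑ p : Fin d × Fin d with p.1 < p.2,
          if σ⁻¹ p.1 < σ⁻¹ p.2 then g p.1 p.2 else g p.2 p.1 := by
  let sorted (τ : Equiv.Perm (Fin d)) (p : Fin d × Fin d) : Fin d × Fin d :=
    if τ p.1 < τ p.2 then (τ p.1, τ p.2) else (τ p.2, τ p.1)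
  have sorted_lt (τ : Equiv.Perm (Fin d)) {p : Fin d × Fin d} (hp : p.1 < p.2) :
      (sorted τ p).1 < (sorted τ p).2 := by
    grind [τ.injective.ne hp.ne]
  have sorted_inv (τ : Equiv.Perm (Fin d)) {p : Fin d × Fin d} (hp : p.1 < p.2) :
      sorted τ⁻¹ (sorted τ p) = p := by
    by_cases h : τ p.1 < τ p.2 <;> simp [sorted, h, hp, hp.not_gt]
  refine sum_bij' (fun p _ => sorted σ p) (fun p _ => sorted σ⁻¹ p) ?_ ?_ ?_ ?_ ?_ <;>
    intro p hp <;> rw [mem_filter_univ] at hp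
  · exact mem_filter_univ _ |>.2 (sorted_lt σ hp)
  · exact mem_filter_univ _ |>.2 (sorted_lt σ⁻¹ hp)
  · exact sorted_inv σ hp
  · simpa only [inv_inv] using sorted_inv σ⁻¹ hp
  · by_cases h : σ p.1 < σ p.2 <;> simp [sorted, h, hp, hp.not_gt]

lemma even_card_inversions_add {X : Type*} (ord : LinearOrder X) (odd : Fin d → Prop)
    (f : Fin d → X) (hf : ∀ k l, odd k → odd l → f k = f l → k = l) (σ : Equiv.Perm (Fin d)) :
    Even (#{p : Fin d × Fin d | p.1 < p.2 ∧ σ⁻¹ p.2 < σ⁻¹ p.1 ∧ odd p.1 ∧ odd p.2}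
      + (#{p : Fin d × Fin d | p.1 < p.2 ∧ odd p.1 ∧ odd p.2 ∧ f p.2 < f p.1}
        + #{p : Fin d × Fin d |
            p.1 < p.2 ∧ odd (σ p.1) ∧ odd (σ p.2) ∧ f (σ p.2) < f (σ p.1)})) := by
  simp only [card_filter_lt_and]
  rw [sum_lt_comp_perm σ fun k l => if odd k ∧ odd l ∧ f l < f k then 1 else 0,
    ← sum_add_distrib, ← sum_add_distrib]
  refine even_sum _ fun p hp => ?_
  rw [mem_filter_univ] at hp
  generalize σ⁻¹ = τ
  by_cases hodd : odd p.1 ∧ odd p.2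
  · have hne : f p.1 ≠ f p.2 := fun h => hp.ne (hf _ _ hodd.1 hodd.2 h)
    rcases (τ.injective.ne hp.ne).lt_or_gt with h | h <;>
      rcases hne.lt_or_gt with h' | h' <;>
      simp [hodd, h, h', h.not_gt, h'.not_gt]
  · have hodd' : ¬ (odd p.2 ∧ odd p.1) := fun h => hodd h.symm
    grind

lemma odd_card_inversions_swap (odd : Fin d → Prop) {k l : Fin d} (hkl : k < l) (hk : odd k)
    (hl : odd l) :
    Odd #{p : Fin d × Fin d | p.1 < p.2 ∧
      (Equiv.swap k l)⁻¹ p.2 < (Equiv.swap k l)⁻¹ p.1 ∧ odd p.1 ∧ odd p.2} := by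
  set τ := Equiv.swap k l
  set inversions := filter (fun p : Fin d × Fin d => p.1 < p.2 ∧ τ⁻¹ p.2 < τ⁻¹ p.1 ∧
    odd p.1 ∧ odd p.2) univ
  have mem_inversions {p : Fin d × Fin d} :
      p ∈ inversions ↔ p.1 < p.2 ∧ τ p.2 < τ p.1 ∧ odd p.1 ∧ odd p.2 := by
    rw [mem_filter_univ, Equiv.swap_inv]
  have odd_swap {i : Fin d} (hi : odd i) : odd (τ i) := by
    grind
  have kl_mem : (k, l) ∈ inversions := by
    simp [mem_inversions, τ, hkl, hk, hl]
  -- `(i, j) ↦ (τ j, τ i)` is an involution of the inversions with the single fixed point `(k, l)`.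
  have sum_eq_zero : ∑ _p ∈ inversions.erase (k, l), (1 : ZMod 2) = 0 := by
    refine sum_involution (fun p _ => (τ p.2, τ p.1)) (fun _ _ => by decide) ?_ ?_ ?_
    · rintro ⟨i, j⟩ hp - hfix
      grind
    · rintro ⟨i, j⟩ hp
      obtain ⟨hne, hij, hτ, hi, hj⟩ : (i, j) ≠ (k, l) ∧ i < j ∧ τ j < τ i ∧ odd i ∧ odd j := by
        simpa only [mem_erase, mem_inversions] using hp
      refine mem_erase.2 ⟨fun h => ?_, mem_inversions.2 ⟨hτ, ?_, odd_swap hj, odd_swap hi⟩⟩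
      · grind
      · simpa [τ] using hij
    · simp [τ]
  have even_erase : Even #(inversions.erase (k, l)) := by
    simpa [← ZMod.natCast_eq_zero_iff_even] using sum_eq_zero
  rw [← card_erase_add_one kl_mem]
  exact even_erase.add_one

end Parity

namespace GoodPair

variable (P : GoodPair 𝕜 A β)

lemma cc_le_ev : P.cc ≤ P.ev :=
  P.aa_sup_cc ▸ le_sup_right

lemma part_cases (i : β) : P.part i = 0 ∨ P.part i = 1 ∨ P.part i = 2 := by
  omega

lemma bas_mem_ev {i : β} (hi : P.part i ≠ 2) : P.bas i ∈ P.ev := by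
  rcases P.part_cases i with h | h | h
  · exact P.aa_le_ev (P.bas_mem_aa i h)
  · exact P.cc_le_ev (P.bas_mem_cc i h)
  · exact absurd h hi

lemma homog_bas (i : β) : Homog P (P.bas i) :=
  or_iff_not_imp_right.2 fun h => P.bas_mem_ev fun hi => h (P.bas_mem_od i hi)

lemma bas_mem_od_iff [Nontrivial 𝕜] {i : β} : P.bas i ∈ P.od ↔ P.part i = 2 := by
  refine ⟨fun hod => ?_, P.bas_mem_od i⟩
  by_contra h
  exact P.bas.ne_zero i (Submodule.disjoint_def.1 P.compl.disjoint _ (P.bas_mem_ev h) hod)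

lemma aa_le_span : P.aa ≤ Submodule.span 𝕜 (P.bas '' {i | P.part i = 0}) := by
  let S (j : Fin 3) : Submodule 𝕜 A := Submodule.span 𝕜 (P.bas '' {i | P.part i = j})
  have span_le {j : Fin 3} {N : Submodule 𝕜 A} (h : ∀ i, P.part i = j → P.bas i ∈ N) :
      S j ≤ N :=
    Submodule.span_le.2 (Set.image_subset_iff.2 h)
  have sup_eq_top : S 0 ⊔ (S 1 ⊔ S 2) = ⊤ := by
    rw [eq_top_iff, ← P.bas.span_eq, Submodule.span_le]
    rintro _ ⟨i, rfl⟩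
    have mem_S : P.bas i ∈ S (P.part i) := Submodule.subset_span ⟨i, rfl, rfl⟩
    rcases P.part_cases i with h | h | h <;> rw [h] at mem_S
    · exact le_sup_left (a := S 0) mem_S
    · exact (le_sup_left.trans le_sup_right : S 1 ≤ S 0 ⊔ (S 1 ⊔ S 2)) mem_S
    · exact (le_sup_right.trans le_sup_right : S 2 ≤ S 0 ⊔ (S 1 ⊔ S 2)) mem_S
  have disjoint_aa : Disjoint P.aa (P.cc ⊔ P.od) :=
    (disjoint_iff.2 P.aa_inf_cc).disjoint_sup_right_of_disjoint_sup_left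
      (P.aa_sup_cc.symm ▸ P.compl.disjoint)
  have inf_eq_bot : (S 1 ⊔ S 2) ⊓ P.aa = ⊥ :=
    (disjoint_aa.mono_right
      (sup_le_sup (span_le P.bas_mem_cc) (span_le P.bas_mem_od))).symm.eq_bot
  calc P.aa = (S 0 ⊔ (S 1 ⊔ S 2)) ⊓ P.aa := by rw [sup_eq_top, top_inf_eq]
    _ = S 0 ⊔ (S 1 ⊔ S 2) ⊓ P.aa := sup_inf_assoc_of_le _ (span_le P.bas_mem_aa)
    _ ≤ S 0 := by rw [inf_eq_bot, sup_bot_eq]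

end GoodPair

/-- A letter `(b, r, s)`, encoding the basis element `ξ^b_{r,s}` of `M_n(A)`. -/
abbrev Letter (β : Type) (n : ℕ) : Type :=
  β × Fin n × Fin n

section BasisTensors

variable {P : GoodPair 𝕜 A β} (D : Tower 𝕜 A β n T P) {d m e : ℕ}

/-- The pure tensor of the basis elements of `M_n(A)` encoded by the letters of a word. -/
def wordTensor (w : Fin d → Letter β n) : T d :=
  D.X (fun k => P.bas (w k).1) (fun k => (w k).2.1) (fun k => (w k).2.2)

/-- The basis of `M_n(A)^{⊗d}` given by the pure tensors of basis elements, indexed by words. -/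
def wordBasis (d : ℕ) : Module.Basis (Fin d → Letter β n) 𝕜 (T d) :=
  (D.bas d).reindex
    ⟨fun p k => (p.1 k, p.2.1 k, p.2.2 k),
      fun w => (fun k => (w k).1, fun k => (w k).2.1, fun k => (w k).2.2),
      fun _ => rfl, fun _ => rfl⟩

lemma wordBasis_apply (w : Fin d → Letter β n) : wordBasis D d w = wordTensor D w := by
  rw [wordBasis, Module.Basis.reindex_apply]
  exact D.bas_eq d _ _ _

lemma wordTensor_append (u : Fin m → Letter β n) (v : Fin e → Letter β n) :
    wordTensor D (Fin.append u v)
      = D.X (Fin.append (fun k => P.bas (u k).1) fun k => P.bas (v k).1)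
          (Fin.append (fun k => (u k).2.1) fun k => (v k).2.1)
          (Fin.append (fun k => (u k).2.2) fun k => (v k).2.2) := by
  unfold wordTensor
  congr 1 <;> funext k <;> induction k using Fin.addCases <;> simp

/-- `D.X` as a multilinear map in the entries of the matrix units. -/
def entryMultilinear (r s : Fin d → Fin n) : MultilinearMap 𝕜 (fun _ : Fin d => A) (T d) :=
  .mk' (fun a => D.X a r s) (fun a => D.X_update_add a r s) fun a => D.X_update_smul a r s

lemma X_mem_span_wordTensor {a : Fin d → A} (ha : ∀ k, a k ∈ P.aa) (r s : Fin d → Fin n) :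
    D.X a r s ∈ Submodule.span 𝕜 (wordTensor D '' {u | ∀ k, P.part (u k).1 = 0}) := by
  let support (k : Fin d) : Finset β := (P.bas.repr (a k)).support
  have part_eq_zero {k : Fin d} {i : β} (hi : i ∈ support k) : P.part i = 0 :=
    P.bas.mem_span_image.1 (P.aa_le_span (ha k)) hi
  have expand : a = fun k => ∑ i ∈ support k, P.bas.repr (a k) i • P.bas i :=
    funext fun k => (P.bas.linearCombination_repr (a k)).symm
  change entryMultilinear D r s a ∈ _
  rw [expand, MultilinearMap.map_sum_finset]
  refine Submodule.sum_mem _ fun b hb => ?_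
  rw [MultilinearMap.map_smul_univ]
  exact Submodule.smul_mem _ _ (Submodule.subset_span ⟨fun k => (b k, r k, s k),
    fun k => part_eq_zero (Fintype.mem_piFinset.1 hb k), rfl⟩)

/-- The Koszul sign count `⟨σ;𝐛⟩` of a word. -/
def wordSgn (P : GoodPair 𝕜 A β) (σ : Equiv.Perm (Fin d)) (w : Fin d → Letter β n) : ℕ :=
  sgnc P.od σ fun k => P.bas (w k).1

lemma act_wordTensor (σ : Equiv.Perm (Fin d)) (w : Fin d → Letter β n) :
    D.act σ (wordTensor D w) = (-1 : ℤ) ^ wordSgn P σ w • wordTensor D (w ∘ σ) :=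
  D.act_X σ _ _ _ fun _ => P.homog_bas _

lemma wordSgn_one (w : Fin d → Letter β n) : wordSgn P 1 w = 0 :=
  card_eq_zero.2 (filter_eq_empty_iff.2 fun _ _ h => lt_asymm h.1 h.2.1)

lemma wordSgn_eq_zero [Nontrivial 𝕜] {u : Fin d → Letter β n} (hu : ∀ k, P.part (u k).1 = 0)
    (σ : Equiv.Perm (Fin d)) : wordSgn P σ u = 0 := by
  refine card_eq_zero.2 (filter_eq_empty_iff.2 fun p _ h => ?_)
  simpa [hu] using P.bas_mem_od_iff.1 h.2.2.1

lemma wordSgn_permAppend (α : Equiv.Perm (Fin m)) (γ : Equiv.Perm (Fin e))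
    (u : Fin m → Letter β n) (v : Fin e → Letter β n) :
    wordSgn P (permAppend α γ) (Fin.append u v) = wordSgn P α u + wordSgn P γ v := by
  have lt_iff (a b : Fin m) : Fin.castAdd e a < Fin.castAdd e b ↔ a < b := Iff.rfl
  have not_lt (a : Fin m) (b : Fin e) : ¬ Fin.natAdd m b < Fin.castAdd e a :=
    (a.isLt.trans_le (Nat.le_add_right m b)).not_gt
  unfold wordSgn sgnc
  rw [card_filter, card_filter, card_filter]
  simp only [Fintype.sum_prod_type, Fin.sum_univ_add, permAppend_inv,
    permAppend_castAdd, permAppend_natAdd, Fin.append_left, Fin.append_right,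
    Fin.natAdd_lt_natAdd_iff, lt_iff, not_lt, false_and, and_false, if_false, sum_const_zero,
    add_zero, zero_add]

lemma act_wordTensor_of_part_eq_zero [Nontrivial 𝕜] {u : Fin d → Letter β n}
    (hu : ∀ k, P.part (u k).1 = 0) (σ : Equiv.Perm (Fin d)) :
    D.act σ (wordTensor D u) = wordTensor D (u ∘ σ) := by
  rw [act_wordTensor, wordSgn_eq_zero hu, pow_zero, one_smul]

end BasisTensors

section Invariants

variable {P : GoodPair 𝕜 A β} (D : Tower 𝕜 A β n T P) [Nontrivial 𝕜]

lemma repr_act_apply {d : ℕ} {x : T d}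
    (hx : x ∈ Submodule.span 𝕜 (wordTensor D '' {u | ∀ k, P.part (u k).1 = 0}))
    (σ : Equiv.Perm (Fin d)) (w : Fin d → Letter β n) :
    (wordBasis D d).repr (D.act σ x) (w ∘ σ) = (wordBasis D d).repr x w := by
  refine LinearMap.eqOn_span (f := (wordBasis D d).coord (w ∘ σ) ∘ₗ D.act σ)
    (g := (wordBasis D d).coord w) ?_ hx
  rintro _ ⟨u, hu, rfl⟩
  have comp_eq_iff : u ∘ σ = w ∘ σ ↔ u = w := σ.surjective.injective_comp_right.eq_iff
  rw [LinearMap.comp_apply, act_wordTensor_of_part_eq_zero D hu, ← wordBasis_apply,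
    ← wordBasis_apply, Module.Basis.coord_apply, Module.Basis.coord_apply,
    Module.Basis.repr_self_apply, Module.Basis.repr_self_apply]
  simp only [comp_eq_iff]

lemma SchurA_le_span (d : ℕ) :
    SchurA D d ≤ Submodule.span 𝕜
      ((fun u => ∑ u' ∈ wordOrbit u, wordTensor D u') '' {u | ∀ k, P.part (u k).1 = 0}) := by
  rintro x ⟨hx, x_invariant⟩
  set coeff := (wordBasis D d).repr x
  replace hx : x ∈ Submodule.span 𝕜 (wordTensor D '' {u | ∀ k, P.part (u k).1 = 0}) := by
    refine Submodule.span_le.2 ?_ hx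
    rintro _ ⟨a, r, s, ha, rfl⟩
    exact X_mem_span_wordTensor D ha r s
  have part_eq_zero : ∀ w ∈ coeff.support, ∀ k, P.part (w k).1 = 0 := by
    rw [← funext (wordBasis_apply D)] at hx
    exact (wordBasis D d).mem_span_image.1 hx
  have coeff_comp (w : Fin d → Letter β n) (σ : Equiv.Perm (Fin d)) :
      coeff (w ∘ σ) = coeff w := by
    rw [← repr_act_apply D hx σ w, x_invariant σ]
  have expand : ∑ w ∈ coeff.support, coeff w • wordTensor D w = x := by
    simp only [← wordBasis_apply]
    exact (wordBasis D d).linearCombination_repr x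
  have wordOrbit_subset : ∀ w ∈ coeff.support, wordOrbit w ⊆ coeff.support := by
    intro w hw w' hw'
    obtain ⟨σ, rfl⟩ := mem_wordOrbit.1 hw'
    rwa [Finsupp.mem_support_iff, coeff_comp, ← Finsupp.mem_support_iff]
  rw [← expand]
  exact Submodule.span_mono (Set.image_mono part_eq_zero)
    (sum_smul_mem_span_wordOrbit _ wordOrbit_subset (wordTensor D) coeff
      fun w _ σ => coeff_comp w σ)

lemma SchurA_eq_span (d : ℕ) :
    SchurA D d = Submodule.span 𝕜
      ((fun u => ∑ u' ∈ wordOrbit u, wordTensor D u') '' {u | ∀ k, P.part (u k).1 = 0}) := by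
  refine le_antisymm (SchurA_le_span D d) (Submodule.span_le.2 ?_)
  rintro _ ⟨u, hu, rfl⟩
  have part_eq_zero : ∀ u' ∈ wordOrbit u, ∀ k, P.part (u' k).1 = 0 := by
    intro u' hu' k
    obtain ⟨σ, rfl⟩ := mem_wordOrbit.1 hu'
    exact hu (σ k)
  refine ⟨Submodule.sum_mem _ fun u' hu' => Submodule.subset_span ⟨_, _, _, fun k =>
    P.bas_mem_aa _ (part_eq_zero u' hu' k), rfl⟩, fun σ => ?_⟩
  change D.act σ (∑ u' ∈ wordOrbit u, wordTensor D u') = _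
  rw [map_sum]
  exact (sum_congr rfl fun u' hu' =>
    act_wordTensor_of_part_eq_zero D (part_eq_zero u' hu') σ).trans
      (sum_wordOrbit_comp_perm (wordTensor D) u σ)

end Invariants

section StarPowers

variable {P : GoodPair 𝕜 A β} (D : Tower 𝕜 A β n T P) {d m e : ℕ}

/-- The sum of the translates of a tensor under the symmetric group. -/
def symmetrize (x : T d) : T d :=
  ∑ σ : Equiv.Perm (Fin d), D.act σ x

lemma star_wordTensor (u : Fin m → Letter β n) (v : Fin e → Letter β n) :
    D.star (wordTensor D u) (wordTensor D v)
      = ∑ σ with IsShuffle m e σ, D.act σ (wordTensor D (Fin.append u v)) := by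
  simp only [wordTensor_append]
  exact D.star_X ..

lemma star_act_wordTensor (α : Equiv.Perm (Fin m)) (γ : Equiv.Perm (Fin e))
    (u : Fin m → Letter β n) (v : Fin e → Letter β n) :
    D.star (D.act α (wordTensor D u)) (D.act γ (wordTensor D v))
      = ∑ σ with IsShuffle m e σ,
          D.act (permAppend α γ * σ) (wordTensor D (Fin.append u v)) := by
  simp only [← D.act_act, act_wordTensor, wordSgn_permAppend, append_comp_permAppend, map_zsmul,
    LinearMap.smul_apply, star_wordTensor, smul_smul, smul_sum, pow_add]
  refine sum_congr rfl fun σ _ => ?_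
  congr 1
  ring

lemma star_symmetrize (u : Fin m → Letter β n) (v : Fin e → Letter β n) :
    D.star (symmetrize D (wordTensor D u)) (symmetrize D (wordTensor D v))
      = symmetrize D (wordTensor D (Fin.append u v)) := by
  simp only [symmetrize, map_sum, LinearMap.sum_apply, star_act_wordTensor]
  rw [sum_comm]
  exact sum_permAppend_mul_shuffle fun τ => D.act τ (wordTensor D (Fin.append u v))

lemma starSub_span (s : Set (T m)) (t : Set (T e)) :
    starSub D (Submodule.span 𝕜 s) (Submodule.span 𝕜 t)
      = Submodule.span 𝕜 (Set.image2 (fun x y => D.star x y) s t) := by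
  have set_eq (U : Submodule 𝕜 (T m)) (V : Submodule 𝕜 (T e)) :
      {z | ∃ u ∈ U, ∃ v ∈ V, z = D.star u v} = Set.image2 (fun x y => D.star x y) U V :=
    Set.ext fun z => by simp [eq_comm]
  rw [starSub, set_eq, ← Submodule.map₂_eq_span_image2, Submodule.map₂_span_span]

lemma symmetrize_wordTensor_of_subsingleton [Subsingleton (Fin d)] (w : Fin d → Letter β n) :
    symmetrize D (wordTensor D w) = wordTensor D w := by
  rw [symmetrize, Fintype.sum_subsingleton _ 1, act_wordTensor, wordSgn_one, pow_zero, one_smul]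
  rfl

lemma Ysub_eq_span :
    Ysub D = Submodule.span 𝕜
      ((fun v => symmetrize D (wordTensor D v)) ''
        {v : Fin 1 → Letter β n | ∀ k, P.part (v k).1 ≠ 0}) := by
  refine congrArg (Submodule.span 𝕜) (Set.ext fun x => ?_)
  simp only [symmetrize_wordTensor_of_subsingleton]
  constructor
  · rintro ⟨i, r, s, hi, rfl⟩
    exact ⟨fun _ => (i, r, s), fun _ => hi, rfl⟩
  · rintro ⟨v, hv, rfl⟩
    refine ⟨(v 0).1, (v 0).2.1, (v 0).2.2, hv 0, ?_⟩
    exact congrArg (wordTensor D) (funext fun k => congrArg v (Subsingleton.elim k 0))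

lemma starPow_eq_span (e : ℕ) :
    starPow D e = Submodule.span 𝕜
      ((fun v => symmetrize D (wordTensor D v)) '' {v | ∀ k, P.part (v k).1 ≠ 0}) := by
  induction e with
  | zero =>
    have eq_unit (v : Fin 0 → Letter β n) :
        symmetrize D (wordTensor D v) = D.X Fin.elim0 Fin.elim0 Fin.elim0 := by
      rw [symmetrize_wordTensor_of_subsingleton, wordTensor]
      congr 1 <;> exact Subsingleton.elim _ _
    have nonempty : {v : Fin 0 → Letter β n | ∀ k, P.part (v k).1 ≠ 0}.Nonempty :=
      ⟨Fin.elim0, fun k => k.elim0⟩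
    rw [starPow, funext eq_unit, nonempty.image_const]
  | succ e ih =>
    rw [starPow, ih, Ysub_eq_span, starSub_span, Set.image2_image_left, Set.image2_image_right]
    simp only [star_symmetrize]
    congr 1
    ext x
    constructor
    · rintro ⟨v, hv, y, hy, rfl⟩
      exact ⟨Fin.append v y, Fin.addCases (by simpa using hv) (by simpa using hy), rfl⟩
    · rintro ⟨v, hv, rfl⟩
      exact ⟨fun k => v (Fin.castAdd 1 k), fun k => hv _, fun k => v (Fin.natAdd e k),
        fun k => hv _, by simp only [Fin.append_castAdd_natAdd]⟩

end StarPowers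

section SignedOrbitSums

variable {P : GoodPair 𝕜 A β} (D : Tower 𝕜 A β n T P) (ord : LinearOrder (A × Fin n × Fin n))
  {d m e : ℕ}

/-- `(𝐛,𝐫,𝐬) ∈ Tri^B(n,d)` for the word of letters `(b_k,r_k,s_k)`. -/
def IsTriWord (P : GoodPair 𝕜 A β) (w : Fin d → Letter β n) : Prop :=
  IsTriB P (fun k => (w k).1) (fun k => (w k).2.1) fun k => (w k).2.2

/-- `⟨𝐛,𝐫,𝐬⟩` for the word of letters `(b_k,r_k,s_k)`. -/
def wordAng (P : GoodPair 𝕜 A β) (ord : LinearOrder (A × Fin n × Fin n))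
    (w : Fin d → Letter β n) : ℕ :=
  ang P.od ord (fun k => P.bas (w k).1) (fun k => (w k).2.1) fun k => (w k).2.2

/-- `ξ^𝐛_{𝐫,𝐬}` for the word of letters `(b_k,r_k,s_k)`. -/
def wordXi (w : Fin d → Letter β n) : T d :=
  xiB D ord (fun k => (w k).1) (fun k => (w k).2.1) fun k => (w k).2.2

/-- `η^𝐛_{𝐫,𝐬}` for the word of letters `(b_k,r_k,s_k)`. -/
def wordEta (w : Fin d → Letter β n) : T d :=
  eta D ord (fun k => (w k).1) (fun k => (w k).2.1) fun k => (w k).2.2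

lemma isTriWord_iff {w : Fin d → Letter β n} :
    IsTriWord P w ↔ ∀ k l, k ≠ l → w k = w l → P.part (w k).1 ≠ 2 :=
  Iff.rfl

lemma wordEta_eq (w : Fin d → Letter β n) :
    wordEta D ord w = letterFactorial (fun x => P.part x.1 = 1) w • wordXi D ord w := by
  simp only [wordEta, eta, facSel, mco, letterFactorial, letterMult, wordXi]
  congr!

lemma SchurT_eq_span (d : ℕ) :
    SchurT D ord d = Submodule.span 𝕜 (wordEta D ord '' {w | IsTriWord P w}) := by
  refine congrArg (Submodule.span 𝕜) (Set.ext fun x => ⟨?_, ?_⟩)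
  · rintro ⟨b, r, s, h, rfl⟩
    exact ⟨fun k => (b k, r k, s k), h, rfl⟩
  · rintro ⟨w, hw, rfl⟩
    exact ⟨_, _, _, hw, rfl⟩

lemma IsTriWord.comp_perm {w : Fin d → Letter β n} (hw : IsTriWord P w)
    (σ : Equiv.Perm (Fin d)) : IsTriWord P (w ∘ σ) :=
  fun _ _ hkl => hw _ _ (σ.injective.ne hkl)

lemma IsTriWord.append {u : Fin m → Letter β n} {v : Fin e → Letter β n}
    (hu : ∀ k, P.part (u k).1 = 0) (hv : ∀ k, P.part (v k).1 ≠ 0) (htri : IsTriWord P v) :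
    IsTriWord P (Fin.append u v) := by
  rw [isTriWord_iff]
  intro k l hkl heq
  induction k using Fin.addCases with
  | left k => simp [hu k]
  | right k =>
    rw [Fin.append_right] at heq ⊢
    induction l using Fin.addCases with
    | left l =>
      rw [Fin.append_left] at heq
      exact absurd (heq ▸ hu l) (hv k)
    | right l =>
      rw [Fin.append_right] at heq
      exact htri k l (fun h => hkl (h ▸ rfl)) heq

lemma symmetrize_wordTensor_eq_zero {w : Fin d → Letter β n} (hw : ¬ IsTriWord P w) :
    symmetrize D (wordTensor D w) = 0 := by
  simp only [isTriWord_iff, not_forall, not_not] at hw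
  obtain ⟨k, l, hne, heq, hk⟩ := hw
  wlog hkl : k < l generalizing k l
  · exact this l k hne.symm heq.symm (heq ▸ hk) (lt_of_le_of_ne (not_lt.1 hkl) hne.symm)
  have comp_swap : w ∘ Equiv.swap k l = w := by
    funext i
    grind
  have act_swap : D.act (Equiv.swap k l) (wordTensor D w) = -wordTensor D w := by
    have odd_sgn : Odd (wordSgn P (Equiv.swap k l) w) :=
      odd_card_inversions_swap (fun i => P.bas (w i).1 ∈ P.od) hkl (P.bas_mem_od _ hk)
        (P.bas_mem_od _ (heq ▸ hk))
    rw [act_wordTensor, odd_sgn.neg_one_pow, comp_swap, neg_one_smul]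
  refine sum_involution (fun σ _ => Equiv.swap k l * σ) (fun σ _ => ?_) (fun σ _ _ => ?_)
    (fun σ _ => mem_univ _) fun σ _ => Equiv.swap_mul_self_mul k l σ
  · rw [← D.act_act, act_swap, map_neg, add_neg_cancel]
  · rwa [Ne, mul_eq_right, Equiv.swap_eq_one_iff]

lemma wordXi_eq [Nontrivial 𝕜] (w : Fin d → Letter β n) :
    wordXi D ord w = ∑ w' ∈ wordOrbit w,
      (-1 : ℤ) ^ (wordAng P ord w + wordAng P ord w') • wordTensor D w' := by
  let entries (w' : Fin d → Letter β n) : (Fin d → A) × (Fin d → Fin n) × (Fin d → Fin n) :=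
    (fun k => P.bas (w' k).1, fun k => (w' k).2.1, fun k => (w' k).2.2)
  have entries_injective : Function.Injective entries := by
    intro w₁ w₂ h
    simp only [entries, Prod.mk.injEq, funext_iff, P.bas.injective.eq_iff] at h
    exact funext fun k => Prod.ext (h.1 k) (Prod.ext (h.2.1 k) (h.2.2 k))
  have orbit_eq : (univ.image fun σ : Equiv.Perm (Fin d) =>
      ((fun k => P.bas (w k).1) ∘ σ, (fun k => (w k).2.1) ∘ σ, (fun k => (w k).2.2) ∘ σ))
        = (wordOrbit w).image entries := by
    ext p
    simp only [mem_image, mem_univ, true_and, mem_wordOrbit, exists_exists_eq_and]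
    rfl
  rw [wordXi, xiB, xiH, orbit_eq, sum_image fun _ _ _ _ h => entries_injective h]
  rfl

lemma act_wordTensor_of_isTriWord [Nontrivial 𝕜] {w : Fin d → Letter β n} (hw : IsTriWord P w)
    (σ : Equiv.Perm (Fin d)) :
    D.act σ (wordTensor D w)
      = (-1 : ℤ) ^ (wordAng P ord w + wordAng P ord (w ∘ σ)) • wordTensor D (w ∘ σ) := by
  have even_add : Even (wordSgn P σ w + (wordAng P ord w + wordAng P ord (w ∘ σ))) := by
    refine even_card_inversions_add ord (fun k => P.bas (w k).1 ∈ P.od)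
      (fun k => (P.bas (w k).1, (w k).2)) (fun k l hk _ heq => ?_) σ
    by_contra hkl
    obtain ⟨bas_eq, index_eq⟩ := Prod.mk.inj heq
    exact hw k l hkl (Prod.ext (P.bas.injective bas_eq) index_eq) (P.bas_mem_od_iff.1 hk)
  rw [act_wordTensor, neg_one_pow_congr (Nat.even_add.1 even_add)]

lemma wordXi_comp_perm [Nontrivial 𝕜] (w : Fin d → Letter β n) (ρ : Equiv.Perm (Fin d)) :
    wordXi D ord w
      = (-1 : ℤ) ^ (wordAng P ord w + wordAng P ord (w ∘ ρ)) • wordXi D ord (w ∘ ρ) := by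
  simp only [wordXi_eq, wordOrbit_comp_perm, smul_sum, smul_smul, ← pow_add]
  refine sum_congr rfl fun w' _ => ?_
  congr 1
  refine neg_one_pow_congr ?_
  simp only [Nat.even_add]
  tauto

lemma stabCard_append {u : Fin m → Letter β n} {v : Fin e → Letter β n}
    (hu : ∀ k, P.part (u k).1 = 0) (hv : ∀ k, P.part (v k).1 ≠ 0)
    (htri : IsTriWord P (Fin.append u v)) :
    stabCard (Fin.append u v)
      = stabCard u * letterFactorial (fun x => P.part x.1 = 1) (Fin.append u v) := by
  rw [stabCard_eq_letterFactorial_mul fun x => P.part x.1 = 0,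
    letterFactorial_append (p := fun x : Letter β n => P.part x.1 = 0) hu hv,
    letterFactorial_eq_of_imp (q := fun x => P.part x.1 = 1)]
  · intro x hx
    simp [hx]
  · intro k l hkl heq h
    exact (or_iff_not_imp_right.1 ((P.part_cases _).resolve_left h)) (htri k l hkl heq)

lemma star_sum_wordOrbit_symmetrize [Nontrivial 𝕜] {u : Fin m → Letter β n}
    {v : Fin e → Letter β n} (hu : ∀ k, P.part (u k).1 = 0) (hv : ∀ k, P.part (v k).1 ≠ 0)
    (htri : IsTriWord P (Fin.append u v)) :
    D.star (∑ u' ∈ wordOrbit u, wordTensor D u') (symmetrize D (wordTensor D v))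
      = wordEta D ord (Fin.append u v) := by
  set w := Fin.append u v
  let signed (w' : Fin (m + e) → Letter β n) : T (m + e) :=
    (-1 : ℤ) ^ (wordAng P ord w + wordAng P ord w') • wordTensor D w'
  have star_act {u' : Fin m → Letter β n} (hu' : u' ∈ wordOrbit u) (γ : Equiv.Perm (Fin e)) :
      D.star (wordTensor D u') (D.act γ (wordTensor D v))
        = ∑ σ with IsShuffle m e σ, signed (Fin.append u' (v ∘ γ) ∘ σ) := by
    obtain ⟨α, rfl⟩ := mem_wordOrbit.1 hu'
    rw [← act_wordTensor_of_part_eq_zero D hu, star_act_wordTensor]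
    refine sum_congr rfl fun σ _ => ?_
    rw [act_wordTensor_of_isTriWord D ord htri, ← append_comp_permAppend]
    rfl
  rw [wordEta_eq, wordXi_eq, ← sum_wordOrbit_shuffle signed (stabCard_append hu hv htri)]
  simp only [symmetrize, map_sum, LinearMap.sum_apply]
  rw [sum_comm]
  exact sum_congr rfl fun u' hu' => sum_congr rfl fun γ _ => star_act hu' γ

end SignedOrbitSums

section Decomposition

variable {P : GoodPair 𝕜 A β} (D : Tower 𝕜 A β n T P) (ord : LinearOrder (A × Fin n × Fin n))
  {d m e : ℕ}

/-- The number of letters `(b,r,s)` of a word with `b ∈ B_𝔠 ⊔ B_1`, the degree which separates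
the summands. -/
def outerCount (P : GoodPair 𝕜 A β) (w : Fin d → Letter β n) : ℕ :=
  #{k | P.part (w k).1 ≠ 0}

/-- The summand `S^𝔞(n,m) * Star^e Y` of degree `d = m + e`. -/
def starSummand (h : m + e = d) : Submodule 𝕜 (T d) :=
  (starSub D (SchurA D m) (starPow D e)).map (tcast (𝕜 := 𝕜) h).toLinearMap

lemma outerCount_comp_perm (w : Fin d → Letter β n) (σ : Equiv.Perm (Fin d)) :
    outerCount P (w ∘ σ) = outerCount P w :=
  card_equiv σ fun k => by simp

lemma outerCount_append {u : Fin m → Letter β n} {v : Fin e → Letter β n}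
    (hu : ∀ k, P.part (u k).1 = 0) (hv : ∀ k, P.part (v k).1 ≠ 0) :
    outerCount P (Fin.append u v) = e := by
  rw [outerCount, card_filter, Fin.sum_univ_add]
  simp [hu, hv]

lemma wordEta_mem_span [Nontrivial 𝕜] (w : Fin d → Letter β n) :
    wordEta D ord w
      ∈ Submodule.span 𝕜 (wordBasis D d '' {w' | outerCount P w' = outerCount P w}) := by
  rw [wordEta_eq, wordXi_eq]
  refine nsmul_mem (Submodule.sum_mem _ fun w' hw' => zsmul_mem (Submodule.subset_span ?_) _) _
  obtain ⟨σ, rfl⟩ := mem_wordOrbit.1 hw'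
  exact ⟨_, outerCount_comp_perm w σ, wordBasis_apply D _⟩

lemma wordEta_comp_perm [Nontrivial 𝕜] (w : Fin d → Letter β n) (ρ : Equiv.Perm (Fin d)) :
    wordEta D ord w
      = (-1 : ℤ) ^ (wordAng P ord w + wordAng P ord (w ∘ ρ)) • wordEta D ord (w ∘ ρ) := by
  rw [wordEta_eq, wordEta_eq, letterFactorial_comp_perm, wordXi_comp_perm D ord w ρ, smul_comm]

lemma starSummand_le [Nontrivial 𝕜] (h : m + e = d) :
    starSummand D h
      ≤ SchurT D ord d ⊓ Submodule.span 𝕜 (wordBasis D d '' {w | outerCount P w = e}) := by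
  subst h
  rw [starSummand, Submodule.map_le_iff_le_comap, SchurA_eq_span, starPow_eq_span, starSub_span,
    Submodule.span_le]
  rintro _ ⟨_, ⟨u, hu, rfl⟩, _, ⟨v, hv, rfl⟩, rfl⟩
  change D.star (∑ u' ∈ wordOrbit u, wordTensor D u') (symmetrize D (wordTensor D v)) ∈ _
  by_cases htri : IsTriWord P v
  · rw [star_sum_wordOrbit_symmetrize D ord hu hv (htri.append hu hv), SchurT_eq_span]
    refine ⟨Submodule.subset_span ⟨_, htri.append hu hv, rfl⟩, ?_⟩
    have := wordEta_mem_span D ord (Fin.append u v)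
    rwa [outerCount_append hu hv] at this
  · rw [symmetrize_wordTensor_eq_zero D htri, map_zero]
    exact Submodule.zero_mem _

lemma exists_wordEta_mem_starSummand [Nontrivial 𝕜] {w : Fin d → Letter β n}
    (hw : IsTriWord P w) : ∃ (m e : ℕ) (h : m + e = d), wordEta D ord w ∈ starSummand D h := by
  obtain ⟨m, e, u, v, ρ, w_comp, hu, hv⟩ :=
    exists_comp_equiv_eq_append (fun x : Letter β n => P.part x.1 = 0) w
  obtain rfl : m + e = d := by simpa using Fintype.card_congr ρ
  refine ⟨m, e, rfl, ?_⟩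
  have htri : IsTriWord P (Fin.append u v) := w_comp ▸ hw.comp_perm ρ
  have orbit_sum_mem : ∑ u' ∈ wordOrbit u, wordTensor D u' ∈ SchurA D m := by
    rw [SchurA_eq_span]
    exact Submodule.subset_span ⟨u, hu, rfl⟩
  have symmetrize_mem : symmetrize D (wordTensor D v) ∈ starPow D e := by
    rw [starPow_eq_span]
    exact Submodule.subset_span ⟨v, hv, rfl⟩
  have eta_mem : wordEta D ord (Fin.append u v) ∈ starSummand D rfl := by
    rw [← star_sum_wordOrbit_symmetrize D ord hu hv htri]
    exact ⟨_, Submodule.subset_span ⟨_, orbit_sum_mem, _, symmetrize_mem, rfl⟩, rfl⟩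
  rw [wordEta_comp_perm D ord w ρ, w_comp]
  exact zsmul_mem eta_mem _

theorem statement9_general [Nontrivial 𝕜] (d : ℕ) :
    iSupIndep (fun e : Fin (d + 1) =>
      starSummand D (Nat.sub_add_cancel (Nat.le_of_lt_succ e.isLt))) ∧
    ⨆ e : Fin (d + 1), starSummand D (Nat.sub_add_cancel (Nat.le_of_lt_succ e.isLt))
      = SchurT D ord d := by
  have graded (e : Fin (d + 1)) :=
    starSummand_le D ord (Nat.sub_add_cancel (Nat.le_of_lt_succ e.isLt))
  constructor
  · exact ((iSupIndep_span_image_fiber (wordBasis D d).linearIndependent (outerCount P)).comp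
      Fin.val_injective).mono fun e => (graded e).trans inf_le_right
  · refine le_antisymm (iSup_le fun e => (graded e).trans inf_le_left) ?_
    rw [SchurT_eq_span, Submodule.span_le]
    rintro _ ⟨w, hw, rfl⟩
    obtain ⟨m, e, h, eta_mem⟩ := exists_wordEta_mem_starSummand D ord hw
    obtain rfl : m = d - e := by omega
    exact Submodule.mem_iSup_of_mem (⟨e, by omega⟩ : Fin (d + 1)) eta_mem

end Decomposition

/-- `T^A_𝔞(n,d) = ⊕_{e=0}^d S^𝔞(n,d−e) * Star^e Y`:  the family of
submodules `S^𝔞(n,d−e) * Star^e Y`, `0 ≤ e ≤ d`, of `M_n(A)^{⊗d}` is independent and its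
supremum is `T^A_𝔞(n,d)`. -/
theorem statement9 {𝕜 A β : Type} [CommRing 𝕜] [IsDomain 𝕜] [CharZero 𝕜]
    [NonUnitalRing A] [Module 𝕜 A] [SMulCommClass 𝕜 A A] [IsScalarTower 𝕜 A A]
    {n : ℕ} (hn : 0 < n) {T : ℕ → Type} [∀ e, NonUnitalRing (T e)] [∀ e, Module 𝕜 (T e)]
    (P : GoodPair 𝕜 A β) (D : Tower 𝕜 A β n T P) (ord : LinearOrder (A × Fin n × Fin n))
    (d : ℕ) :
    iSupIndep (fun e : Fin (d + 1) =>
      Submodule.map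
        (tcast (𝕜 := 𝕜) (show (d - (e : ℕ)) + (e : ℕ) = d by have := e.isLt; omega)).toLinearMap
        (starSub D (SchurA D (d - (e : ℕ))) (starPow D (e : ℕ)))) ∧
    (⨆ e : Fin (d + 1),
      Submodule.map
        (tcast (𝕜 := 𝕜) (show (d - (e : ℕ)) + (e : ℕ) = d by have := e.isLt; omega)).toLinearMap
        (starSub D (SchurA D (d - (e : ℕ))) (starPow D (e : ℕ))))
      = SchurT D ord d :=
  statement9_general D ord d
end GS
end
end

section
/- The 𝕜-submodule T^A_𝔞(n,d) of S^A(n,d) depends only on the subalgebra 𝔞 and not on the choices made in its definition: if 𝔠, B and 𝔠′, B′ are two choices of complement of 𝔞 in A_0 and of (A,𝔞)-basis, then the 𝕜-span of the elements η^𝐛_{𝐫,𝐬} constructed from (𝔠, B) equals the 𝕜-span of the elements η^{𝐛′}_{𝐫,𝐬} constructed from (𝔠′, B′). -/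
open Finset

open scoped Classical TensorProduct

noncomputable section

namespace GS

variable {𝕜 A β : Type} [CommRing 𝕜] [NonUnitalRing A] [Module 𝕜 A]

variable {n : ℕ} {T : ℕ → Type} [∀ e, NonUnitalRing (T e)] [∀ e, Module 𝕜 (T e)]

/-!
Let `S_d` act on `M_n(A)^{⊗d}` from the left through inverses, and write `tr_H` for the relative
trace from a subgroup `H`, that is, the sum over `S_d/H`. For a word `𝐛` in `B`, let `S_𝐛` be the
group of permutations preserving `(𝐛,𝐫,𝐬)` and moving only positions `k` with `b_k ∈ B_𝔞`. The
stabilizer of a word in `Tri^B(n,d)` is generated by `S_𝐛` and its analogue for `B_𝔠`, whose order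
is `[𝐛,𝐫,𝐬]^!_𝔠`; hence `η^𝐛_{𝐫,𝐬} = tr_{S_𝐛} (X 𝐛)`, where `X 𝐛` is the pure tensor of `𝐛`. For
a word outside `Tri^B(n,d)` an odd transposition makes this trace vanish, so `T^A_𝔞(n,d)` is the
span of the traces of all words.

Now expand `X 𝐛 = ∑ c_w X' w` over the words `w` in `B'`. Elements of `B_𝔞` expand in `B'_𝔞`, so
if `c_w ≠ 0`, the stabilizer of `w` in `S_𝐛` is contained in `S_w`. Summing over the `S_𝐛`-orbits
of words writes `tr_{S_𝐛} (X 𝐛)` as a linear combination of the `tr_{S_w} (X' w)`, the orbit of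
`w` contributing `c_w` times the index of its stabilizer in `S_w`.
-/

section RelativeTrace

variable {k G M : Type*} [CommSemiring k] [Group G] [AddCommMonoid M] [Module k M]

/-- The relative trace `∑_{gH ∈ G/H} ρ g : M → M` of a representation `ρ` from a subgroup `H` to
`G`. It is meant to be applied to `H`-fixed vectors: on other vectors it depends on the choice of
coset representatives. -/
def relTrace [Fintype G] (ρ : Representation k G M) (H : Subgroup G) : M →ₗ[k] M :=
  ∑ q : G ⧸ H, ρ q.out

lemma relTrace_apply [Fintype G] (ρ : Representation k G M) (H : Subgroup G) (x : M) :
    relTrace ρ H x = ∑ q : G ⧸ H, ρ q.out x := by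
  simp only [relTrace, LinearMap.sum_apply]

lemma rep_out_mk_apply (ρ : Representation k G M) {H : Subgroup G} {x : M}
    (hx : ∀ h ∈ H, ρ h x = x) (g : G) : ρ (g : G ⧸ H).out x = ρ g x := by
  obtain ⟨h, hh⟩ := QuotientGroup.mk_out_eq_mul H g
  rw [hh, map_mul, Module.End.mul_apply, hx h h.2]

variable [Fintype G]

lemma relTrace_of_fixed (ρ : Representation k G M) (H : Subgroup G) {x : M}
    (hx : ∀ g, ρ g x = x) : relTrace ρ H x = H.index • x := by
  simp only [relTrace_apply, hx, sum_const, card_univ, Subgroup.index, Nat.card_eq_fintype_card]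

lemma relTrace_relTrace_subgroupOf (ρ : Representation k G M) {H K : Subgroup G} (hHK : H ≤ K)
    {x : M} (hx : ∀ h ∈ H, ρ h x = x) :
    relTrace ρ K (relTrace (ρ.comp K.subtype) (H.subgroupOf K) x) = relTrace ρ H x := by
  simp only [relTrace_apply, map_sum]
  rw [← Fintype.sum_prod_type_right' fun (q : G ⧸ K) (r : K ⧸ H.subgroupOf K) =>
    ρ q.out ((ρ.comp K.subtype) r.out x)]
  refine Fintype.sum_equiv (Subgroup.quotientEquivProdOfLE hHK).symm _ _ ?_
  rintro ⟨q, r⟩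
  have hmk : (Subgroup.quotientEquivProdOfLE hHK).symm (q, r) = ((q.out * r.out : G) : G ⧸ H) := by
    conv_lhs => rw [← QuotientGroup.out_eq' r]
    rfl
  rw [hmk, rep_out_mk_apply ρ hx, map_mul]
  rfl

lemma relTrace_relTrace (ρ : Representation k G M) (K : Subgroup G) (H : Subgroup K) {x : M}
    (hx : ∀ h ∈ H, ρ h x = x) :
    relTrace ρ K (relTrace (ρ.comp K.subtype) H x) = relTrace ρ (H.map K.subtype) x := by
  have hx' : ∀ h ∈ H.map K.subtype, ρ h x = x := by
    rintro _ ⟨h, hh, rfl⟩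
    exact hx h hh
  rw [← relTrace_relTrace_subgroupOf ρ (Subgroup.map_subtype_le H) hx', Subgroup.subgroupOf,
    Subgroup.comap_map_eq_self_of_injective K.subtype_injective]

lemma relTrace_of_le (ρ : Representation k G M) {H K : Subgroup G} (hHK : H ≤ K) {x : M}
    (hx : ∀ g ∈ K, ρ g x = x) : relTrace ρ H x = H.relIndex K • relTrace ρ K x := by
  rw [← relTrace_relTrace_subgroupOf ρ hHK fun h hh => hx h (hHK hh),
    relTrace_of_fixed (ρ.comp K.subtype) _ fun g => hx g g.2, map_nsmul, Subgroup.relIndex]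

lemma relTrace_eq_zero_of_involution (ρ : Representation k G M) {H : Subgroup G} {τ : G} {x : M}
    (hτ : τ * τ = 1) (hτH : τ ∉ H) (hcomm : ∀ h ∈ H, Commute τ h)
    (hx : ∀ h ∈ H, ρ h x = x) (hneg : x + ρ τ x = 0) : relTrace ρ H x = 0 := by
  rw [relTrace_apply]
  refine Finset.sum_involution (fun q _ => ((q.out * τ : G) : G ⧸ H)) (fun q _ => ?_)
    (fun q _ _ hq => hτH ?_) (fun _ _ => mem_univ _) (fun q _ => ?_)
  · rw [rep_out_mk_apply ρ hx, map_mul, Module.End.mul_apply, ← map_add, hneg, map_zero]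
  · have hmem := QuotientGroup.eq.1 (hq.trans (QuotientGroup.out_eq' q).symm)
    simpa only [mul_inv_rev, mul_assoc, inv_mul_cancel, mul_one, inv_mem_iff] using hmem
  · obtain ⟨h, hh⟩ := QuotientGroup.mk_out_eq_mul H (q.out * τ)
    simp only [hh]
    rw [mul_assoc, mul_assoc, ← (hcomm h h.2).eq, ← mul_assoc τ, hτ, one_mul,
      QuotientGroup.mk_mul_of_mem _ h.2, QuotientGroup.out_eq']

variable {Ω : Type*} [MulAction G Ω] {F : Ω → M}

lemma sum_orbit_eq_relTrace (ρ : Representation k G M) {v : Ω} {x : M}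
    [Fintype (MulAction.orbit G v)] (hF : ∀ g : G, F (g • v) = ρ g x) :
    ∑ w : MulAction.orbit G v, F w = relTrace ρ (MulAction.stabilizer G v) x := by
  rw [relTrace_apply]
  refine Fintype.sum_equiv (MulAction.orbitEquivQuotientStabilizer G v) _ _ fun w => ?_
  obtain ⟨q, rfl⟩ := (MulAction.orbitEquivQuotientStabilizer G v).symm.surjective w
  rw [Equiv.apply_symm_apply, ← hF, ← MulAction.orbitEquivQuotientStabilizer_symm_apply,
    QuotientGroup.out_eq']

lemma sum_eq_sum_relTrace_stabilizer [Fintype Ω] (ρ : Representation k G M)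
    (hF : ∀ (g : G) w, F (g • w) = ρ g (F w)) :
    ∑ w, F w = ∑ ω : MulAction.orbitRel.Quotient G Ω,
      relTrace ρ (MulAction.stabilizer G ω.out) (F ω.out) := by
  rw [Fintype.sum_equiv (MulAction.selfEquivSigmaOrbits G Ω) F (fun p => F p.2) fun _ => rfl,
    Fintype.sum_sigma]
  exact Fintype.sum_congr _ _ fun ω => sum_orbit_eq_relTrace ρ fun g => hF g _

end RelativeTrace

/-- An element of `N` of the form `tr_H^G (F w)` is multiplied by `[H : K_w]` when `H` is replaced
by the stabilizer `K_w ≤ H`. -/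
lemma relTrace_sum_mem {k G M Ω : Type*} [CommSemiring k] [Group G] [Fintype G] [AddCommMonoid M]
    [Module k M] [Fintype Ω] (ρ : Representation k G M) (K : Subgroup G) [MulAction K Ω]
    {F : Ω → M} (N : Submodule k M) (hF : ∀ (g : K) w, F (g • w) = ρ g (F w))
    (hN : ∀ w, ∃ H, (MulAction.stabilizer K w).map K.subtype ≤ H ∧ (∀ g ∈ H, ρ g (F w) = F w) ∧
      relTrace ρ H (F w) ∈ N) :
    relTrace ρ K (∑ w, F w) ∈ N := by
  rw [sum_eq_sum_relTrace_stabilizer (ρ.comp K.subtype) hF, map_sum]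
  refine N.sum_mem fun ω _ => ?_
  obtain ⟨H, hle, hfix, hmem⟩ := hN ω.out
  rw [relTrace_relTrace ρ K _ fun g hg => (hF g _).symm.trans (congrArg F hg),
    relTrace_of_le ρ hle hfix]
  exact N.nsmul_mem hmem _

section Inversions

variable {ι L : Type*} [Fintype ι] [LinearOrder ι] [LinearOrder L]

/-- The inversions of `t` among the positions satisfying `p`. With `p` the set of odd positions,
the counts `⟨σ;𝐚⟩` and `⟨𝐚,𝐫,𝐬⟩` are both of this form. -/
def inversions (p : ι → Prop) (t : ι → L) : Finset (ι × ι) :=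
  univ.filter fun kl => kl.1 < kl.2 ∧ p kl.1 ∧ p kl.2 ∧ t kl.2 < t kl.1

lemma mem_inversions {p : ι → Prop} {t : ι → L} {kl : ι × ι} :
    kl ∈ inversions p t ↔ kl.1 < kl.2 ∧ p kl.1 ∧ p kl.2 ∧ t kl.2 < t kl.1 := by
  simp only [inversions, mem_filter, mem_univ, true_and]

lemma inversions_eq_empty {p : ι → Prop} {σ : Equiv.Perm ι} (hσ : ∀ k, p k → σ k = k) :
    inversions p σ = ∅ := by
  refine eq_empty_of_forall_notMem fun kl hkl => ?_
  obtain ⟨hlt, hk, hl, hinv⟩ := mem_inversions.1 hkl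
  rw [hσ _ hk, hσ _ hl] at hinv
  exact lt_asymm hlt hinv

lemma card_inversions_comp {p : ι → Prop} {t : ι → L} (ht : Set.InjOn t {k | p k})
    (σ : Equiv.Perm ι) :
    (inversions (p ∘ σ) (t ∘ σ)).card =
      (symmDiff (inversions p t) (inversions p ⇑σ⁻¹)).card := by
  have ht' : ∀ k l, p k → p l → t k = t l → k = l := fun k l hk hl => @ht k hk l hl
  have hσ : ∀ k, σ (σ⁻¹ k) = k := σ.apply_symm_apply
  have hσ' : ∀ k, σ⁻¹ (σ k) = k := σ.symm_apply_apply
  refine Finset.card_nbij'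
    (fun kl => (min (σ kl.1) (σ kl.2), max (σ kl.1) (σ kl.2)))
    (fun kl => (min (σ⁻¹ kl.1) (σ⁻¹ kl.2), max (σ⁻¹ kl.1) (σ⁻¹ kl.2))) ?_ ?_ ?_ ?_
  all_goals
    rintro ⟨k, l⟩ hkl
    simp only [mem_coe, mem_symmDiff, mem_inversions, Function.comp_apply] at hkl ⊢
    grind

lemma card_symmDiff_add_two_mul_card_inter {α : Type*} [DecidableEq α] (s t : Finset α) :
    (symmDiff s t).card + 2 * (s ∩ t).card = s.card + t.card := by
  have hcard : (symmDiff s t).card = (s \ t).card + (t \ s).card := by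
    rw [symmDiff_def, sup_eq_union, card_union_of_disjoint disjoint_sdiff_sdiff]
  have hs := card_sdiff_add_card_inter s t
  have ht := card_sdiff_add_card_inter t s
  rw [inter_comm] at ht
  omega

lemma neg_one_pow_card_inversions_inv {p : ι → Prop} {t : ι → L} (ht : Set.InjOn t {k | p k})
    (σ : Equiv.Perm ι) :
    (-1 : ℤ) ^ (inversions p ⇑σ⁻¹).card =
      (-1) ^ ((inversions p t).card + (inversions (p ∘ σ) (t ∘ σ)).card) := by
  have hcard := card_symmDiff_add_two_mul_card_inter (inversions p t) (inversions p ⇑σ⁻¹)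
  rw [card_inversions_comp ht]
  refine neg_one_pow_congr ?_
  grind

/-- The map `(k, l) ↦ (τ l, τ k)` is an involution on the inversions of an involution `τ`; for
`τ = (i j)` its only fixed point is `(i, j)`. -/
lemma odd_card_inversions_swap_s10 {p : ι → Prop} {i j : ι} (hij : i < j) (hi : p i) (hj : p j) :
    Odd (inversions p (Equiv.swap i j)).card := by
  have hmem : (i, j) ∈ inversions p (Equiv.swap i j) := by
    simp only [mem_inversions, Equiv.swap_apply_left, Equiv.swap_apply_right]
    exact ⟨hij, hi, hj, hij⟩
  have hrest : ∑ _kl ∈ (inversions p (Equiv.swap i j)).erase (i, j), (1 : ZMod 2) = 0 := by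
    refine Finset.sum_involution (fun kl _ => (Equiv.swap i j kl.2, Equiv.swap i j kl.1))
      (fun _ _ => by decide) ?_ ?_ ?_
    all_goals
      rintro ⟨k, l⟩ hkl
      simp only [mem_erase, mem_inversions, Equiv.swap_apply_def] at hkl ⊢
      grind
  rw [sum_const, nsmul_one] at hrest
  rw [← ZMod.natCast_eq_one_iff_odd, ← card_erase_add_one hmem, Nat.cast_add, hrest, zero_add,
    Nat.cast_one]

end Inversions

section YoungSubgroup

variable {ι γ : Type*}

/-- The Young subgroup attached to the letters of the word `f` satisfying `p`: the permutations of
the positions which preserve `f` and move only positions carrying such a letter. -/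
def youngSubgroup (p : γ → Prop) (f : ι → γ) : Subgroup (Equiv.Perm ι) where
  carrier := {σ | ∀ k, f (σ k) = f k ∧ (¬ p (f k) → σ k = k)}
  one_mem' _ := ⟨rfl, fun _ => rfl⟩
  mul_mem' {σ τ} hσ hτ k := by
    refine ⟨(hσ _).1.trans (hτ k).1, fun hk => ?_⟩
    rw [Equiv.Perm.mul_apply, (hτ k).2 hk, (hσ k).2 hk]
  inv_mem' {σ} hσ k := by
    have hk := hσ (σ⁻¹ k)
    rw [show σ (σ⁻¹ k) = k from σ.apply_symm_apply k] at hk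
    exact ⟨hk.1.symm, fun hp => (hk.2 (hk.1 ▸ hp)).symm⟩

lemma mem_youngSubgroup {p : γ → Prop} {f : ι → γ} {σ : Equiv.Perm ι} :
    σ ∈ youngSubgroup p f ↔ ∀ k, f (σ k) = f k ∧ (¬ p (f k) → σ k = k) :=
  Iff.rfl

lemma youngSubgroup_mono {p q : γ → Prop} (hpq : ∀ c, p c → q c) (f : ι → γ) :
    youngSubgroup p f ≤ youngSubgroup q f := fun _ hσ k =>
  ⟨(hσ k).1, fun hq => (hσ k).2 fun hp => hq (hpq _ hp)⟩

variable [Fintype ι] [DecidableEq γ]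

lemma card_youngSubgroup (p : γ → Prop) (f : ι → γ) :
    Nat.card (youngSubgroup p f) =
      ∏ c ∈ (univ.image f).filter p, (univ.filter fun k => f k = c).card.factorial := by
  set g : ι → γ ⊕ ι := fun k => if p (f k) then Sum.inl (f k) else Sum.inr k
  have hinl : ∀ c k, g k = Sum.inl c ↔ p c ∧ f k = c := by grind
  have hinr : ∀ j k, g k = Sum.inr j → k = j := by grind
  have hmem : ∀ σ, σ ∈ youngSubgroup p f ↔ g ∘ σ = g := fun σ => by
    simp only [mem_youngSubgroup, funext_iff, Function.comp_apply]
    exact forall_congr' fun k => by grind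
  have hright : ∏ j ∈ (image g univ).toRight,
      (Fintype.card {k // g k = Sum.inr j}).factorial = 1 := prod_eq_one fun j _ => by
    rw [Nat.factorial_eq_one, Fintype.card_le_one_iff_subsingleton]
    exact ⟨fun k l => Subtype.ext ((hinr j _ k.2).trans (hinr j _ l.2).symm)⟩
  have hleft : (image g univ).toLeft = (univ.image f).filter p := by
    ext c
    simp only [mem_toLeft, mem_image, mem_filter, mem_univ, true_and, hinl, exists_and_left,
      and_comm]
  rw [Nat.card_congr (Equiv.subtypeEquivRight hmem), Nat.card_eq_fintype_card,
    DomMulAct.stabilizer_card', ← toLeft_disjSum_toRight (u := image g univ), prod_disjSum,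
    hright, mul_one, hleft]
  refine prod_congr rfl fun c hc => ?_
  simp only [hinl, (mem_filter.1 hc).2, true_and, Fintype.card_subtype]

lemma relIndex_youngSubgroup {p q : γ → Prop} (hpq : ∀ c, p c → q c) (f : ι → γ) :
    (youngSubgroup p f).relIndex (youngSubgroup q f) =
      ∏ c ∈ (univ.image f).filter (fun c => q c ∧ ¬ p c),
        (univ.filter fun k => f k = c).card.factorial := by
  have hindex := Subgroup.relIndex_mul_relIndex ⊥ _ _ bot_le (youngSubgroup_mono hpq f)
  rw [Subgroup.relIndex_bot_left, Subgroup.relIndex_bot_left, card_youngSubgroup q,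
    ← prod_filter_mul_prod_filter_not _ p, filter_filter, filter_filter,
    filter_congr fun c _ => and_iff_right_of_imp (hpq c), ← card_youngSubgroup p] at hindex
  exact Nat.eq_of_mul_eq_mul_left Nat.card_pos hindex

end YoungSubgroup

lemma GoodPair.cc_le_ev_s10 (P : GoodPair 𝕜 A β) : P.cc ≤ P.ev :=
  P.aa_sup_cc ▸ le_sup_right

lemma GoodPair.bas_mem_ev_s10 (P : GoodPair 𝕜 A β) {i : β} (hi : P.part i ≠ 2) : P.bas i ∈ P.ev := by
  have hpart : P.part i = 0 ∨ P.part i = 1 := by omega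
  rcases hpart with h | h
  · exact P.aa_le_ev (P.bas_mem_aa i h)
  · exact P.cc_le_ev_s10 (P.bas_mem_cc i h)

lemma GoodPair.homog_bas_s10 (P : GoodPair 𝕜 A β) (i : β) : Homog P (P.bas i) := by
  by_cases h : P.part i = 2
  · exact Or.inr (P.bas_mem_od i h)
  · exact Or.inl (P.bas_mem_ev_s10 h)

lemma GoodPair.bas_mem_od_iff_s10 [Nontrivial 𝕜] (P : GoodPair 𝕜 A β) (i : β) :
    P.bas i ∈ P.od ↔ P.part i = 2 := by
  refine ⟨fun hod => ?_, P.bas_mem_od i⟩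
  by_contra hne
  exact P.bas.ne_zero i (Submodule.disjoint_def.1 P.compl.disjoint _ (P.bas_mem_ev_s10 hne) hod)

lemma GoodPair.part_eq_zero_of_repr_ne_zero (P : GoodPair 𝕜 A β) {x : A} (hx : x ∈ P.aa) {j : β}
    (hj : P.bas.repr x j ≠ 0) : P.part j = 0 := by
  set pr : Fin 3 → A := fun t =>
    ∑ i ∈ (P.bas.repr x).support.filter (P.part · = t), P.bas.repr x i • P.bas i with hpr
  have hsum : pr 0 + pr 1 + pr 2 = x := by
    rw [← Fin.sum_univ_three, hpr, Finset.sum_fiberwise]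
    exact P.bas.linearCombination_repr x
  have haa : pr 0 ∈ P.aa := P.aa.sum_mem fun i hi =>
    P.aa.smul_mem _ (P.bas_mem_aa i (mem_filter.1 hi).2)
  have hcc : pr 1 ∈ P.cc := P.cc.sum_mem fun i hi =>
    P.cc.smul_mem _ (P.bas_mem_cc i (mem_filter.1 hi).2)
  have hod : pr 2 ∈ P.od := P.od.sum_mem fun i hi =>
    P.od.smul_mem _ (P.bas_mem_od i (mem_filter.1 hi).2)
  have hod0 : pr 2 = 0 := by
    refine Submodule.disjoint_def.1 P.compl.disjoint _ ?_ hod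
    rw [← sub_eq_of_eq_add' hsum.symm]
    exact P.ev.sub_mem (P.aa_le_ev hx) (P.ev.add_mem (P.aa_le_ev haa) (P.cc_le_ev_s10 hcc))
  have hcc0 : pr 1 = 0 := by
    rw [← Submodule.mem_bot 𝕜, ← P.aa_inf_cc]
    refine ⟨?_, hcc⟩
    rw [hod0, add_zero] at hsum
    rw [← sub_eq_of_eq_add' hsum.symm]
    exact P.aa.sub_mem hx haa
  have hspan : x ∈ Submodule.span 𝕜 (P.bas '' {i | P.part i = 0}) := by
    rw [← hsum, hod0, hcc0, add_zero, add_zero]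
    exact Submodule.sum_mem _ fun i hi => Submodule.smul_mem _ _
      (Submodule.subset_span ⟨i, (mem_filter.1 hi).2, rfl⟩)
  exact P.bas.mem_span_image.1 hspan (Finsupp.mem_support_iff.2 hj)

section Signs

variable {d : ℕ}

lemma sgnc_inv (od : Submodule 𝕜 A) (σ : Equiv.Perm (Fin d)) (a : Fin d → A) :
    sgnc od σ⁻¹ a = (inversions (a · ∈ od) σ).card := by
  rw [sgnc, inversions, inv_inv]
  exact congrArg card (filter_congr fun kl _ => by tauto)

lemma ang_eq_card_inversions (od : Submodule 𝕜 A) (ord : LinearOrder (A × Fin n × Fin n))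
    (a : Fin d → A) (r s : Fin d → Fin n) :
    ang od ord a r s = (inversions (a · ∈ od) fun k => (a k, r k, s k)).card :=
  rfl

lemma neg_one_pow_sgnc_inv {od : Submodule 𝕜 A} (ord : LinearOrder (A × Fin n × Fin n))
    {a : Fin d → A} {r s : Fin d → Fin n}
    (hinj : Set.InjOn (fun k => (a k, r k, s k)) {k | a k ∈ od}) (σ : Equiv.Perm (Fin d)) :
    (-1 : ℤ) ^ sgnc od σ⁻¹ a =
      (-1) ^ (ang od ord a r s + ang od ord (a ∘ ⇑σ⁻¹) (r ∘ ⇑σ⁻¹) (s ∘ ⇑σ⁻¹)) := by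
  rw [sgnc_inv, ang_eq_card_inversions, ang_eq_card_inversions]
  exact neg_one_pow_card_inversions_inv hinj σ⁻¹

end Signs

section Tensors

attribute [local instance] arrowAction

lemma perm_smul_eq_self_iff {ι L : Type*} {σ : Equiv.Perm ι} {f : ι → L} :
    σ • f = f ↔ ∀ k, f (σ k) = f k := by
  rw [eq_comm, ← inv_smul_eq_iff, funext_iff]
  rfl

lemma prod_smul_of_smul_eq_self {ι L L' R : Type*} [Fintype ι] [CommMonoid R] (φ : L → L' → R)
    {σ : Equiv.Perm ι} {b : ι → L} (hb : σ • b = b) (w : ι → L') :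
    ∏ k, φ (b k) ((σ • w) k) = ∏ k, φ (b k) (w k) := by
  conv_lhs => rw [← hb]
  exact Equiv.prod_comp σ⁻¹ fun k => φ (b k) (w k)

variable {P : GoodPair 𝕜 A β} {d : ℕ}

/-- The pure tensors of degree `d` as a multilinear function of their `A`-entries. -/
def Tower.multilinearX (D : Tower 𝕜 A β n T P) (r s : Fin d → Fin n) :
    MultilinearMap 𝕜 (fun _ : Fin d => A) (T d) where
  toFun a := D.X a r s
  map_update_add' a k x y := by
    convert D.X_update_add a r s k x y
  map_update_smul' a k c x := by
    convert D.X_update_smul a r s k c x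

lemma Tower.X_eq_sum_X_bas (D : Tower 𝕜 A β n T P)
    (a : Fin d → A) (r s : Fin d → Fin n) {U : Finset β}
    (hU : ∀ k, (P.bas.repr (a k)).support ⊆ U) :
    D.X a r s = ∑ w : Fin d → U, (∏ k, P.bas.repr (a k) (w k)) •
      D.X (fun k => P.bas (w k)) r s := by
  have hexp : ∀ k, ∑ i : U, P.bas.repr (a k) i • P.bas i = a k := fun k => by
    rw [sum_coe_sort U fun i => P.bas.repr (a k) i • P.bas i]
    conv_rhs => rw [← P.bas.linearCombination_repr (a k)]
    exact (Finsupp.sum_of_support_subset _ (hU k) (fun i t => t • P.bas i)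
      fun i _ => zero_smul 𝕜 (P.bas i)).symm
  calc D.X a r s = D.multilinearX r s fun k => ∑ i : U, P.bas.repr (a k) i • P.bas i :=
        congrArg (D.X · r s) (funext fun k => (hexp k).symm)
    _ = _ := by
        rw [MultilinearMap.map_sum]
        exact sum_congr rfl fun w _ => MultilinearMap.map_smul_univ _ _ _

lemma Tower.act_inv_X (D : Tower 𝕜 A β n T P) {a : Fin d → A} (ha : ∀ k, Homog P (a k))
    (r s : Fin d → Fin n) (σ : Equiv.Perm (Fin d)) :
    D.act σ⁻¹ (D.X a r s) =
      (-1 : ℤ) ^ (inversions (a · ∈ P.od) σ).card • D.X (σ • a) (σ • r) (σ • s) := by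
  rw [← sgnc_inv]
  exact D.act_X σ⁻¹ a r s ha

lemma Tower.act_inv_one (D : Tower 𝕜 A β n T P) :
    D.act (1 : Equiv.Perm (Fin d))⁻¹ = LinearMap.id := by
  refine (D.bas d).ext fun w => ?_
  rw [D.bas_eq d w.1 w.2.1 w.2.2, D.act_inv_X fun k => P.homog_bas_s10 _,
    inversions_eq_empty fun _ _ => rfl, card_empty, pow_zero, one_smul, one_smul, one_smul,
    one_smul, LinearMap.id_apply]

/-- The right action `x ↦ x^σ` of the symmetric group, turned into a left action by inversion. -/
def Tower.rep (D : Tower 𝕜 A β n T P) (d : ℕ) : Representation 𝕜 (Equiv.Perm (Fin d)) (T d) where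
  toFun σ := D.act σ⁻¹
  map_one' := D.act_inv_one
  map_mul' σ τ := LinearMap.ext fun x => by
    rw [mul_inv_rev, Module.End.mul_apply, D.act_act]

lemma Tower.rep_X (D : Tower 𝕜 A β n T P) {a : Fin d → A} (ha : ∀ k, Homog P (a k))
    (r s : Fin d → Fin n) (σ : Equiv.Perm (Fin d)) :
    D.rep d σ (D.X a r s) =
      (-1 : ℤ) ^ (inversions (a · ∈ P.od) σ).card • D.X (σ • a) (σ • r) (σ • s) :=
  D.act_inv_X ha r s σ

lemma Tower.rep_eq {β' : Type} {P' : GoodPair 𝕜 A β'} (D : Tower 𝕜 A β n T P)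
    (D' : Tower 𝕜 A β' n T P') (hev : P.ev = P'.ev) (hod : P.od = P'.od)
    (hX : ∀ (a : Fin d → A) (r s : Fin d → Fin n), D.X a r s = D'.X a r s) :
    D.rep d = D'.rep d := by
  refine MonoidHom.ext fun σ => (D.bas d).ext fun w => ?_
  have hhom : ∀ k, Homog P' (P.bas (w.1 k)) := fun k => by
    rw [Homog, ← hev, ← hod]
    exact P.homog_bas_s10 _
  rw [D.bas_eq d w.1 w.2.1 w.2.2, D.rep_X fun k => P.homog_bas_s10 _, hX, hX, D'.rep_X hhom, hod]

/-- The word of entry triples `(b_k, r_k, s_k)`. -/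
def letters (b : Fin d → β) (r s : Fin d → Fin n) (k : Fin d) : β × Fin n × Fin n :=
  (b k, r k, s k)

lemma mem_youngSubgroup_letters {p : β → Prop} {b : Fin d → β} {r s : Fin d → Fin n}
    {σ : Equiv.Perm (Fin d)} :
    σ ∈ youngSubgroup (fun c => p c.1) (letters b r s) ↔
      (σ • b = b ∧ σ • r = r ∧ σ • s = s) ∧ ∀ k, ¬ p (b k) → σ k = k := by
  simp only [mem_youngSubgroup, letters, Prod.mk.injEq, perm_smul_eq_self_iff, forall_and]

lemma apply_eq_self_of_prod_repr_ne_zero {β' : Type} {P' : GoodPair 𝕜 A β'} (haa : P.aa = P'.aa)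
    {b : Fin d → β} {r s : Fin d → Fin n} {σ : Equiv.Perm (Fin d)}
    (hσ : σ ∈ youngSubgroup (fun c => P.part c.1 = 0) (letters b r s)) {w : Fin d → β'}
    (hw : ∏ k, P'.bas.repr (P.bas (b k)) (w k) ≠ 0) {k : Fin d} (hk : P'.part (w k) ≠ 0) :
    σ k = k :=
  (hσ k).2 fun hbk => hk <| P'.part_eq_zero_of_repr_ne_zero (haa ▸ P.bas_mem_aa _ hbk)
    fun hzero => hw (prod_eq_zero (mem_univ k) hzero)

variable [Nontrivial 𝕜]

lemma Tower.rep_X_bas (D : Tower 𝕜 A β n T P) {b : Fin d → β} (r s : Fin d → Fin n)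
    {σ : Equiv.Perm (Fin d)} (hσ : ∀ k, P.part (b k) = 2 → σ k = k) :
    D.rep d σ (D.X (fun k => P.bas (b k)) r s) =
      D.X (fun k => P.bas ((σ • b) k)) (σ • r) (σ • s) := by
  have hodd : ∀ k, P.bas (b k) ∈ P.od → σ k = k := fun k hk => hσ k ((P.bas_mem_od_iff_s10 _).1 hk)
  rw [D.rep_X fun k => P.homog_bas_s10 _, inversions_eq_empty hodd, card_empty, pow_zero, one_smul]
  rfl

lemma Tower.rep_X_bas_of_mem (D : Tower 𝕜 A β n T P) {b : Fin d → β} {r s : Fin d → Fin n}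
    {σ : Equiv.Perm (Fin d)}
    (hσ : σ ∈ youngSubgroup (fun c => P.part c.1 ≠ 2) (letters b r s)) :
    D.rep d σ (D.X (fun k => P.bas (b k)) r s) = D.X (fun k => P.bas (b k)) r s := by
  obtain ⟨⟨hb, hr, hs⟩, hodd⟩ := mem_youngSubgroup_letters (p := (P.part · ≠ 2)) |>.1 hσ
  rw [D.rep_X_bas r s fun k hk => hodd k (not_not.2 hk), hb, hr, hs]

lemma stabilizer_eq_youngSubgroup {b : Fin d → β} {r s : Fin d → Fin n} (h : IsTriB P b r s) :
    MulAction.stabilizer (Equiv.Perm (Fin d)) ((fun k => P.bas (b k)), r, s) =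
      youngSubgroup (fun c => P.part c.1 ≠ 2) (letters b r s) := by
  ext σ
  have hbas : σ • (fun k => P.bas (b k)) = (fun k => P.bas (b k)) ↔ σ • b = b :=
    P.bas.injective.comp_left.eq_iff (a := σ • b)
  rw [mem_youngSubgroup_letters (p := (P.part · ≠ 2)), MulAction.mem_stabilizer_iff, Prod.smul_mk,
    Prod.smul_mk, Prod.mk.injEq, Prod.mk.injEq, hbas, iff_self_and]
  rintro ⟨hb, hr, hs⟩ k hk
  by_contra hne
  refine hk (h k (σ k) (Ne.symm hne) ?_)
  rw [perm_smul_eq_self_iff.1 hb, perm_smul_eq_self_iff.1 hr, perm_smul_eq_self_iff.1 hs]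

lemma IsTriB.injOn_odd {b : Fin d → β} {r s : Fin d → Fin n} (h : IsTriB P b r s) :
    Set.InjOn (fun k => (P.bas (b k), r k, s k)) {k | P.bas (b k) ∈ P.od} := by
  intro k hk l _ hkl
  by_contra hne
  simp only [Prod.mk.injEq, P.bas.injective.eq_iff] at hkl
  refine h k l hne ?_ ((P.bas_mem_od_iff_s10 _).1 hk)
  rw [hkl.1, hkl.2.1, hkl.2.2]

lemma xiB_eq_relTrace (D : Tower 𝕜 A β n T P) (ord : LinearOrder (A × Fin n × Fin n))
    {b : Fin d → β} {r s : Fin d → Fin n} (h : IsTriB P b r s) :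
    xiB D ord b r s =
      relTrace (D.rep d) (youngSubgroup (fun c => P.part c.1 ≠ 2) (letters b r s))
        (D.X (fun k => P.bas (b k)) r s) := by
  set a : Fin d → A := fun k => P.bas (b k)
  have : Fintype (MulAction.orbit (Equiv.Perm (Fin d)) (a, r, s)) :=
    (Set.finite_range _).fintype
  have horbit : univ.image (fun σ : Equiv.Perm (Fin d) => (a ∘ σ, r ∘ σ, s ∘ σ)) =
      (MulAction.orbit (Equiv.Perm (Fin d)) (a, r, s)).toFinset := by
    ext w
    simp only [mem_image, mem_univ, true_and, Set.mem_toFinset]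
    exact (Equiv.inv (Equiv.Perm (Fin d))).exists_congr fun σ => by rfl
  rw [xiB, xiH, horbit, ← sum_set_coe, ← stabilizer_eq_youngSubgroup h]
  set F : (Fin d → A) × (Fin d → Fin n) × (Fin d → Fin n) → T d := fun w =>
    (-1 : ℤ) ^ (ang P.od ord a r s + ang P.od ord w.1 w.2.1 w.2.2) • D.X w.1 w.2.1 w.2.2
  have hF : ∀ σ : Equiv.Perm (Fin d), F (σ • (a, r, s)) = D.rep d σ (D.X a r s) := fun σ => by
    rw [D.rep_X fun k => P.homog_bas_s10 _, ← sgnc_inv, neg_one_pow_sgnc_inv ord h.injOn_odd]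
    rfl
  exact sum_orbit_eq_relTrace (D.rep d) hF

lemma eta_eq_relTrace (D : Tower 𝕜 A β n T P) (ord : LinearOrder (A × Fin n × Fin n))
    {b : Fin d → β} {r s : Fin d → Fin n} (h : IsTriB P b r s) :
    eta D ord b r s =
      relTrace (D.rep d) (youngSubgroup (fun c => P.part c.1 = 0) (letters b r s))
        (D.X (fun k => P.bas (b k)) r s) := by
  have hpart : ∀ c : β × Fin n × Fin n, P.part c.1 = 0 → P.part c.1 ≠ 2 := fun c hc => by
    rw [hc]
    decide
  have hindex : facSel (P.part · = 1) b r s =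
      (youngSubgroup (fun c => P.part c.1 = 0) (letters b r s)).relIndex
        (youngSubgroup (fun c => P.part c.1 ≠ 2) (letters b r s)) := by
    rw [relIndex_youngSubgroup hpart]
    refine prod_congr ?_ fun _ _ => rfl
    ext c
    simp only [mem_filter]
    refine and_congr_right fun _ => ?_
    omega
  rw [relTrace_of_le _ (youngSubgroup_mono hpart _) fun σ hσ => D.rep_X_bas_of_mem hσ,
    ← xiB_eq_relTrace D ord h, ← hindex, eta]

/-- An odd letter at two positions `k ≠ l` makes the transposition `(k l)` act by `-1`. -/
lemma relTrace_X_eq_zero (D : Tower 𝕜 A β n T P) {b : Fin d → β} {r s : Fin d → Fin n}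
    (h : ¬ IsTriB P b r s) :
    relTrace (D.rep d) (youngSubgroup (fun c => P.part c.1 = 0) (letters b r s))
      (D.X (fun k => P.bas (b k)) r s) = 0 := by
  simp only [IsTriB, not_forall, not_not] at h
  obtain ⟨k, l, hne, hkl, hk⟩ := h
  wlog hlt : k < l generalizing k l
  · exact this l k hne.symm hkl.symm (by grind) (hne.symm.lt_of_le (not_lt.1 hlt))
  have hl : P.part (b l) = 2 := by grind
  have hswap : ∀ {L : Type} (f : Fin d → L), f k = f l → Equiv.swap k l • f = f := fun f hf =>
    perm_smul_eq_self_iff.2 fun m => by grind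
  simp only [Prod.mk.injEq] at hkl
  have hfix : ∀ σ ∈ youngSubgroup (fun c => P.part c.1 = 0) (letters b r s), σ k = k ∧ σ l = l :=
    fun σ hσ => ⟨(hσ k).2 (by simp [letters, hk]), (hσ l).2 (by simp [letters, hl])⟩
  refine relTrace_eq_zero_of_involution _ (Equiv.swap_mul_self k l)
    (fun hτ => hne.symm ((Equiv.swap_apply_left k l).symm.trans (hfix _ hτ).1))
    (fun σ hσ => ?_) (fun σ hσ => D.rep_X_bas_of_mem (youngSubgroup_mono (by grind) _ hσ)) ?_
  · rw [Commute, SemiconjBy, Equiv.mul_swap_eq_swap_mul, (hfix σ hσ).1, (hfix σ hσ).2]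
  · have hodd := odd_card_inversions_swap_s10 (p := fun m => P.bas (b m) ∈ P.od) hlt
      (P.bas_mem_od _ hk) (P.bas_mem_od _ hl)
    rw [D.rep_X fun k => P.homog_bas_s10 _, hodd.neg_one_pow, hswap _ (congrArg P.bas hkl.1),
      hswap r hkl.2.1, hswap s hkl.2.2, neg_one_smul, add_neg_cancel]

lemma relTrace_X_mem_schurT (D : Tower 𝕜 A β n T P) (ord : LinearOrder (A × Fin n × Fin n))
    (b : Fin d → β) (r s : Fin d → Fin n) :
    relTrace (D.rep d) (youngSubgroup (fun c => P.part c.1 = 0) (letters b r s))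
      (D.X (fun k => P.bas (b k)) r s) ∈ SchurT D ord d := by
  by_cases h : IsTriB P b r s
  · exact Submodule.subset_span ⟨b, r, s, h, (eta_eq_relTrace D ord h).symm⟩
  · rw [relTrace_X_eq_zero D h]
    exact Submodule.zero_mem _

variable {β' : Type} {P' : GoodPair 𝕜 A β'}

/-- The words in `B'` with nonzero coefficient in the pure tensor of `𝐛` have a letter from `B'_𝔞`
wherever `𝐛` has one from `B_𝔞`. -/
lemma relTrace_X_bas_mem_schurT (haa : P.aa = P'.aa) (D' : Tower 𝕜 A β' n T P')
    (ord' : LinearOrder (A × Fin n × Fin n)) (b : Fin d → β) (r s : Fin d → Fin n) :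
    relTrace (D'.rep d) (youngSubgroup (fun c => P.part c.1 = 0) (letters b r s))
      (D'.X (fun k => P.bas (b k)) r s) ∈ SchurT D' ord' d := by
  set U : Finset β' := univ.biUnion fun k => (P'.bas.repr (P.bas (b k))).support with hU
  rw [D'.X_eq_sum_X_bas _ r s (U := U) fun k => hU ▸
    subset_biUnion_of_mem (fun k => (P'.bas.repr (P.bas (b k))).support) (mem_univ k)]
  refine relTrace_sum_mem (D'.rep d) _ _ (fun g w => ?_) fun w => ?_
  all_goals
    set c : 𝕜 := ∏ k, P'.bas.repr (P.bas (b k)) (w k)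
    set v : Fin d → β' := fun k => w k
  · obtain ⟨⟨hb, hr, hs⟩, -⟩ := mem_youngSubgroup_letters (p := (P.part · = 0)) |>.1 g.2
    have hcoeff : ∏ k, P'.bas.repr (P.bas (b k)) ((g • w) k) = c :=
      prod_smul_of_smul_eq_self (fun i (j : U) => P'.bas.repr (P.bas i) j) hb w
    rw [hcoeff, map_smul]
    rcases eq_or_ne c 0 with hzero | hne
    · rw [hzero, zero_smul, zero_smul]
    · rw [D'.rep_X_bas r s fun k hk => apply_eq_self_of_prod_repr_ne_zero haa g.2 hne (by grind),
        hr, hs]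
      rfl
  · rcases eq_or_ne c 0 with hzero | hne
    · refine ⟨_, le_rfl, ?_⟩
      simp only [hzero, zero_smul, map_zero, Submodule.zero_mem, implies_true, and_self]
    · refine ⟨youngSubgroup (fun c => P'.part c.1 = 0) (letters v r s), ?_, fun g hg => ?_, ?_⟩
      · rintro _ ⟨g, hg, rfl⟩
        obtain ⟨⟨-, hr, hs⟩, -⟩ := mem_youngSubgroup_letters (p := (P.part · = 0)) |>.1 g.2
        exact mem_youngSubgroup_letters (p := (P'.part · = 0)) |>.2
          ⟨⟨congrArg (fun u k => (u k : β')) hg, hr, hs⟩, fun k hk =>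
            apply_eq_self_of_prod_repr_ne_zero haa g.2 hne hk⟩
      · rw [map_smul, D'.rep_X_bas_of_mem (youngSubgroup_mono (by grind) _ hg)]
      · rw [map_smul]
        exact Submodule.smul_mem _ _ (relTrace_X_mem_schurT D' ord' v r s)

lemma schurT_le (hev : P.ev = P'.ev) (hod : P.od = P'.od) (haa : P.aa = P'.aa)
    (D : Tower 𝕜 A β n T P) (D' : Tower 𝕜 A β' n T P')
    (hX : ∀ (a : Fin d → A) (r s : Fin d → Fin n), D.X a r s = D'.X a r s)
    (ord ord' : LinearOrder (A × Fin n × Fin n)) :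
    SchurT D ord d ≤ SchurT D' ord' d := by
  refine Submodule.span_le.2 ?_
  rintro _ ⟨b, r, s, h, rfl⟩
  rw [SetLike.mem_coe, eta_eq_relTrace D ord h, D.rep_eq D' hev hod hX, hX]
  exact relTrace_X_bas_mem_schurT haa D' ord' b r s

end Tensors

theorem statement10_general {𝕜 A β β' : Type} [CommRing 𝕜] [NonUnitalRing A] [Module 𝕜 A]
    {n : ℕ} {T : ℕ → Type} [∀ e, NonUnitalRing (T e)] [∀ e, Module 𝕜 (T e)]
    (P : GoodPair 𝕜 A β) (P' : GoodPair 𝕜 A β')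
    (hev : P.ev = P'.ev) (hod : P.od = P'.od) (haa : P.aa = P'.aa)
    (D : Tower 𝕜 A β n T P) (D' : Tower 𝕜 A β' n T P') {d : ℕ}
    (hX : ∀ (a : Fin d → A) (r s : Fin d → Fin n), D.X a r s = D'.X a r s)
    (ord ord' : LinearOrder (A × Fin n × Fin n)) :
    SchurT D ord d = SchurT D' ord' d := by
  rcases subsingleton_or_nontrivial 𝕜 with _ | _
  · have := Module.subsingleton 𝕜 (T d)
    exact Subsingleton.elim _ _
  · exact le_antisymm (schurT_le hev hod haa D D' hX ord ord')
      (schurT_le hev.symm hod.symm haa.symm D' D (fun a r s => (hX a r s).symm) ord' ord)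

/-- `T^A_𝔞(n,d)` depends only on the subalgebra `𝔞` and not on the choices
made in its definition: if `P` (with complement `𝔠`, basis `B` indexed by `β`, order `ord`)
and `P'` (with complement `𝔠'`, basis `B'` indexed by `β'`, order `ord'`) are two choices of
good-pair data for the *same* superalgebra `(A, ev, od)` and the *same* subalgebra `𝔞`
(hypotheses `hev`, `hod`, `haa`), realized in the same tensor power model (hypothesis `hX`),
then the two spans of the `η`'s coincide. -/
theorem statement10 {𝕜 A β β' : Type} [CommRing 𝕜] [IsDomain 𝕜] [CharZero 𝕜]
    [NonUnitalRing A] [Module 𝕜 A] [SMulCommClass 𝕜 A A] [IsScalarTower 𝕜 A A]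
    {n : ℕ} (hn : 0 < n) {T : ℕ → Type} [∀ e, NonUnitalRing (T e)] [∀ e, Module 𝕜 (T e)]
    (P : GoodPair 𝕜 A β) (P' : GoodPair 𝕜 A β')
    (hev : P.ev = P'.ev) (hod : P.od = P'.od) (haa : P.aa = P'.aa)
    (D : Tower 𝕜 A β n T P) (D' : Tower 𝕜 A β' n T P')
    (hX : ∀ (e : ℕ) (a : Fin e → A) (r s : Fin e → Fin n), D.X a r s = D'.X a r s)
    (ord ord' : LinearOrder (A × Fin n × Fin n)) (d : ℕ) :
    SchurT D ord d = SchurT D' ord' d :=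
  statement10_general P P' hev hod haa D D' (hX d) ord ord'

end GS
end
end
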